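/- arXiv:1308.5695 — 3 statements merged into one kernel-verified Lean document; each statement's English description precedes it below -/
import Mathlib

section
/- Let n ≥ 1 and let q ≤ 1 with q ≠ 0. Every σ-finite q-homogeneous Borel measure μ on ℝⁿ is q-complemented concave: for all λ ∈ (0,1) and all Borel sets A, B ⊆ ℝⁿ with μ(ℝⁿ∖A) < ∞ and μ(ℝⁿ∖B) < ∞, μ_*(ℝⁿ∖(λA+(1−λ)B)) ≤ (λ·μ(ℝⁿ∖A)^q + (1−λ)·μ(ℝⁿ∖B)^q)^{1/q}. -/
open MeasureTheory Set Filter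
open scoped Pointwise ENNReal

/-- The inner measure induced by a measure `μ`. -/
noncomputable def innerMeasure {α : Type*} [MeasurableSpace α] (μ : Measure α) (S : Set α) :
    ℝ≥0∞ :=
  ⨆ (F : Set α) (_ : MeasurableSet F) (_ : F ⊆ S), μ F

open scoped Topology

/-! In polar coordinates `x = v ^ q • y`, `v > 0`, a `q`-homogeneous measure is Lebesgue measure in
`v`: integrating along each ray and averaging over rays gives
`μ A = ∫ |{v > 0 | v ^ q • y ∈ A}| dσ y`. Along a ray, the combination
`lam • (a ^ q • y) + (1 - lam) • (b ^ q • y)` is `m ^ q • y`, where `m` is the power mean of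
exponent `q` of `a` and `b`.

On the half line the claim becomes: if a set `F` contains no power mean of a point of `K` and a
point of `L`, then `|F| ≤ lam * |Kᶜ| + (1 - lam) * |Lᶜ|`. For `K` and `L` closed, the power mean of
their quantile functions is a map into `Fᶜ`. It is expanding, because the power mean is
superadditive for `q ≤ 1` (the reverse Minkowski inequality), so that `Fᶜ` is large; and it
displaces points by at most the right-hand side, because the power mean is at most the arithmetic
mean.

Averaging over rays yields the inequality with the arithmetic mean of `μ Aᶜ` and `μ Bᶜ` on the
right. Dilating `A` and `B` so that their complements have the same measure, homogeneity improves
it to the power mean.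
-/

lemma convexOn_rpow_of_nonpos {q : ℝ} (hq : q ≤ 0) : ConvexOn ℝ (Ioi 0) fun x : ℝ => x ^ q := by
  refine ⟨convex_Ioi 0, fun x hx y hy s t hs ht hst => ?_⟩
  rw [mem_Ioi] at hx hy
  simp only [smul_eq_mul]
  calc (s * x + t * y) ^ q ≤ (x ^ s * y ^ t) ^ q :=
        Real.rpow_le_rpow_of_nonpos (by positivity)
          (Real.geom_mean_le_arith_mean2_weighted hs ht hx.le hy.le hst) hq
    _ = (x ^ q) ^ s * (y ^ q) ^ t := by
        rw [Real.mul_rpow (by positivity) (by positivity), ← Real.rpow_mul hx.le,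
          ← Real.rpow_mul hy.le, ← Real.rpow_mul hx.le, ← Real.rpow_mul hy.le,
          mul_comm s, mul_comm t]
    _ ≤ s * x ^ q + t * y ^ q :=
        Real.geom_mean_le_arith_mean2_weighted hs ht (by positivity) (by positivity) hst

lemma concaveOn_rpow_div {q : ℝ} (hq1 : q ≤ 1) :
    ConcaveOn ℝ (Ioi 0) fun x : ℝ => x ^ q / q := by
  simp only [div_eq_inv_mul]
  rcases le_total q 0 with hq | hq
  · have h := (convexOn_rpow_of_nonpos hq).smul (neg_nonneg.2 (inv_nonpos.2 hq))
    refine h.neg.congr fun x _ => ?_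
    simp
  · exact ((Real.concaveOn_rpow hq hq1).subset Ioi_subset_Ici_self (convex_Ioi 0)).smul
      (inv_nonneg.2 hq)

lemma rpow_div_le_rpow_div_iff {q : ℝ} (hq0 : q ≠ 0) {x y : ℝ} (hx : 0 < x) (hy : 0 < y) :
    x ^ q / q ≤ y ^ q / q ↔ x ≤ y := by
  rcases lt_or_gt_of_ne hq0 with hq | hq
  · rw [div_le_div_right_of_neg hq, Real.rpow_le_rpow_iff_of_neg hy hx hq]
  · rw [div_le_div_iff_of_pos_right hq, Real.rpow_le_rpow_iff hx.le hy.le hq]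

/-- The power mean of exponent `q` of `a` and `b`, with weights `lam` and `1 - lam`; it is
meaningful for `q ≠ 0`, `lam ∈ [0, 1]` and `a, b > 0`. -/
noncomputable def powerMean (q lam a b : ℝ) : ℝ :=
  (lam * a ^ q + (1 - lam) * b ^ q) ^ (1 / q)

section PowerMean

variable {q lam a b a' b' c : ℝ}

lemma powerMean_self (hq0 : q ≠ 0) (ha : 0 ≤ a) : powerMean q lam a a = a := by
  rw [powerMean, ← add_mul, add_sub_cancel, one_mul, one_div, Real.rpow_rpow_inv ha hq0]

lemma weighted_sum_rpow_pos (hlam : lam ∈ Icc (0 : ℝ) 1) (ha : 0 < a) (hb : 0 < b) :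
    0 < lam * a ^ q + (1 - lam) * b ^ q :=
  convex_Ioi (0 : ℝ) (Real.rpow_pos_of_pos ha q) (Real.rpow_pos_of_pos hb q) hlam.1
    (sub_nonneg.2 hlam.2) (add_sub_cancel _ _)

lemma powerMean_pos (hlam : lam ∈ Icc (0 : ℝ) 1) (ha : 0 < a) (hb : 0 < b) :
    0 < powerMean q lam a b :=
  Real.rpow_pos_of_pos (weighted_sum_rpow_pos hlam ha hb) _

lemma powerMean_rpow (hq0 : q ≠ 0) (hlam : lam ∈ Icc (0 : ℝ) 1) (ha : 0 < a) (hb : 0 < b) :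
    powerMean q lam a b ^ q = lam * a ^ q + (1 - lam) * b ^ q := by
  rw [powerMean, one_div, Real.rpow_inv_rpow (weighted_sum_rpow_pos hlam ha hb).le hq0]

lemma powerMean_mul (hq0 : q ≠ 0) (hlam : lam ∈ Icc (0 : ℝ) 1) (hc : 0 ≤ c) (ha : 0 < a)
    (hb : 0 < b) : powerMean q lam (c * a) (c * b) = c * powerMean q lam a b := by
  have hsum : lam * (c * a) ^ q + (1 - lam) * (c * b) ^ q =
      c ^ q * (lam * a ^ q + (1 - lam) * b ^ q) := by
    rw [Real.mul_rpow hc ha.le, Real.mul_rpow hc hb.le]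
    ring
  rw [powerMean, hsum, Real.mul_rpow (by positivity) (weighted_sum_rpow_pos hlam ha hb).le,
    one_div, Real.rpow_rpow_inv hc hq0, ← one_div, ← powerMean]

lemma powerMean_rpow_div (hq0 : q ≠ 0) (hlam : lam ∈ Icc (0 : ℝ) 1) (ha : 0 < a) (hb : 0 < b) :
    powerMean q lam a b ^ q / q = lam * (a ^ q / q) + (1 - lam) * (b ^ q / q) := by
  rw [powerMean_rpow hq0 hlam ha hb]
  ring

lemma le_powerMean_iff (hq0 : q ≠ 0) (hlam : lam ∈ Icc (0 : ℝ) 1) (ha : 0 < a) (hb : 0 < b)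
    (hc : 0 < c) :
    c ≤ powerMean q lam a b ↔ c ^ q / q ≤ lam * (a ^ q / q) + (1 - lam) * (b ^ q / q) := by
  rw [← rpow_div_le_rpow_div_iff hq0 hc (powerMean_pos hlam ha hb),
    powerMean_rpow_div hq0 hlam ha hb]

lemma powerMean_le_powerMean (hq0 : q ≠ 0) (hlam : lam ∈ Icc (0 : ℝ) 1) (ha : 0 < a)
    (hb : 0 < b) (haa' : a ≤ a') (hbb' : b ≤ b') :
    powerMean q lam a b ≤ powerMean q lam a' b' := by
  have ha' := ha.trans_le haa'
  have hb' := hb.trans_le hbb'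
  rw [le_powerMean_iff hq0 hlam ha' hb' (powerMean_pos hlam ha hb),
    powerMean_rpow_div hq0 hlam ha hb]
  exact add_le_add
    (mul_le_mul_of_nonneg_left ((rpow_div_le_rpow_div_iff hq0 ha ha').2 haa') hlam.1)
    (mul_le_mul_of_nonneg_left ((rpow_div_le_rpow_div_iff hq0 hb hb').2 hbb')
      (sub_nonneg.2 hlam.2))

lemma powerMean_le_arith_mean (hq0 : q ≠ 0) (hq1 : q ≤ 1) (hlam : lam ∈ Icc (0 : ℝ) 1)
    (ha : 0 < a) (hb : 0 < b) : powerMean q lam a b ≤ lam * a + (1 - lam) * b := by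
  have hlam' : 0 ≤ 1 - lam := sub_nonneg.2 hlam.2
  have harith : 0 < lam * a + (1 - lam) * b :=
    convex_Ioi (0 : ℝ) ha hb hlam.1 hlam' (add_sub_cancel _ _)
  rw [← rpow_div_le_rpow_div_iff hq0 (powerMean_pos hlam ha hb) harith,
    powerMean_rpow_div hq0 hlam ha hb]
  exact (concaveOn_rpow_div hq1).2 ha hb hlam.1 hlam' (add_sub_cancel _ _)

lemma le_powerMean_convex_combination (hq0 : q ≠ 0) (hq1 : q ≤ 1) (hlam : lam ∈ Icc (0 : ℝ) 1)
    (ha : 0 < a) (hb : 0 < b) (ha' : 0 < a') (hb' : 0 < b') (hc : 0 < c)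
    (h : c ≤ powerMean q lam a b) (h' : c ≤ powerMean q lam a' b') {s t : ℝ} (hs : 0 ≤ s)
    (ht : 0 ≤ t) (hst : s + t = 1) :
    c ≤ powerMean q lam (s * a + t * a') (s * b + t * b') := by
  rw [le_powerMean_iff hq0 hlam ha hb hc] at h
  rw [le_powerMean_iff hq0 hlam ha' hb' hc] at h'
  have ha_comb : 0 < s * a + t * a' := convex_Ioi (0 : ℝ) ha ha' hs ht hst
  have hb_comb : 0 < s * b + t * b' := convex_Ioi (0 : ℝ) hb hb' hs ht hst
  rw [le_powerMean_iff hq0 hlam ha_comb hb_comb hc]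
  have hconc := concaveOn_rpow_div hq1
  calc c ^ q / q = s * (c ^ q / q) + t * (c ^ q / q) := by rw [← add_mul, hst, one_mul]
    _ ≤ s * (lam * (a ^ q / q) + (1 - lam) * (b ^ q / q)) +
          t * (lam * (a' ^ q / q) + (1 - lam) * (b' ^ q / q)) := by gcongr
    _ = lam * (s * (a ^ q / q) + t * (a' ^ q / q)) +
          (1 - lam) * (s * (b ^ q / q) + t * (b' ^ q / q)) := by ring
    _ ≤ lam * ((s * a + t * a') ^ q / q) + (1 - lam) * ((s * b + t * b') ^ q / q) :=
        add_le_add (mul_le_mul_of_nonneg_left (hconc.2 ha ha' hs ht hst) hlam.1)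
          (mul_le_mul_of_nonneg_left (hconc.2 hb hb' hs ht hst) (sub_nonneg.2 hlam.2))

lemma powerMean_add_powerMean_le (hq0 : q ≠ 0) (hq1 : q ≤ 1) (hlam : lam ∈ Icc (0 : ℝ) 1)
    (ha : 0 < a) (hb : 0 < b) (ha' : 0 < a') (hb' : 0 < b') :
    powerMean q lam a b + powerMean q lam a' b' ≤ powerMean q lam (a + a') (b + b') := by
  have hm := powerMean_pos (q := q) hlam ha hb
  have hm' := powerMean_pos (q := q) hlam ha' hb'
  have normalized : ∀ {x y : ℝ}, 0 < x → 0 < y →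
      1 ≤ powerMean q lam ((powerMean q lam x y)⁻¹ * x) ((powerMean q lam x y)⁻¹ * y) :=
    fun {x y} hx hy => by
      have hxy := powerMean_pos (q := q) hlam hx hy
      rw [powerMean_mul hq0 hlam (by positivity) hx hy, inv_mul_cancel₀ hxy.ne']
  have hone := normalized ha hb
  have hone' := normalized ha' hb'
  set m := powerMean q lam a b
  set m' := powerMean q lam a' b'
  have hcomb := le_powerMean_convex_combination hq0 hq1 hlam (by positivity) (by positivity)
    (by positivity) (by positivity) one_pos hone hone' (s := m / (m + m')) (t := m' / (m + m'))
    (by positivity) (by positivity) (by field_simp)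
  have hrescale : ∀ x x' : ℝ,
      m / (m + m') * (m⁻¹ * x) + m' / (m + m') * (m'⁻¹ * x') = (m + m')⁻¹ * (x + x') :=
    fun x x' => by field_simp
  rwa [hrescale, hrescale, powerMean_mul hq0 hlam (by positivity) (by positivity) (by positivity),
    one_le_inv_mul₀ (by positivity)] at hcomb

lemma powerMean_add_le_of_add_le (hq0 : q ≠ 0) (hq1 : q ≤ 1) (hlam : lam ∈ Icc (0 : ℝ) 1)
    (ha : 0 < a) (hb : 0 < b) (hc : 0 ≤ c) (haa' : a + c ≤ a') (hbb' : b + c ≤ b') :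
    powerMean q lam a b + c ≤ powerMean q lam a' b' := by
  refine le_trans ?_ (powerMean_le_powerMean hq0 hlam (by positivity) (by positivity) haa' hbb')
  rcases hc.eq_or_lt with rfl | hc
  · simp only [add_zero, le_refl]
  · calc powerMean q lam a b + c = powerMean q lam a b + powerMean q lam c c := by
          rw [powerMean_self hq0 hc.le]
      _ ≤ powerMean q lam (a + c) (b + c) :=
          powerMean_add_powerMean_le hq0 hq1 hlam ha hb hc hc

lemma ofReal_powerMean (hlam : lam ∈ Icc (0 : ℝ) 1) (ha : 0 < a) (hb : 0 < b) :
    ENNReal.ofReal (powerMean q lam a b) =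
      (ENNReal.ofReal lam * ENNReal.ofReal a ^ q +
        ENNReal.ofReal (1 - lam) * ENNReal.ofReal b ^ q) ^ (1 / q) := by
  have hlam' : 0 ≤ 1 - lam := sub_nonneg.2 hlam.2
  rw [powerMean, ← ENNReal.ofReal_rpow_of_pos (weighted_sum_rpow_pos hlam ha hb),
    ENNReal.ofReal_add (mul_nonneg hlam.1 (by positivity)) (by positivity),
    ENNReal.ofReal_mul hlam.1, ENNReal.ofReal_mul hlam', ENNReal.ofReal_rpow_of_pos ha,
    ENNReal.ofReal_rpow_of_pos hb]

lemma tendsto_ofReal_powerMean_add (hlam : lam ∈ Icc (0 : ℝ) 1) {s t : ℝ≥0∞} (hs : s ≠ ⊤)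
    (ht : t ≠ ⊤) :
    Tendsto (fun ε : ℝ => ENNReal.ofReal (powerMean q lam (s.toReal + ε) (t.toReal + ε)))
      (𝓝[>] 0)
      (𝓝 ((ENNReal.ofReal lam * s ^ q + ENNReal.ofReal (1 - lam) * t ^ q) ^ (1 / q))) := by
  have hcont : Continuous fun ε : ℝ =>
      (ENNReal.ofReal lam * ENNReal.ofReal (s.toReal + ε) ^ q +
        ENNReal.ofReal (1 - lam) * ENNReal.ofReal (t.toReal + ε) ^ q) ^ (1 / q) := by
    have hterm : ∀ c x : ℝ, Continuous fun ε : ℝ => ENNReal.ofReal c * ENNReal.ofReal (x + ε) ^ q :=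
      fun c x => (ENNReal.continuous_const_mul ENNReal.ofReal_ne_top).comp
        (ENNReal.continuous_rpow_const.comp
          (ENNReal.continuous_ofReal.comp (continuous_const_add x)))
    exact ENNReal.continuous_rpow_const.comp ((hterm _ _).add (hterm _ _))
  have hzero := hcont.tendsto 0
  simp only [add_zero, ENNReal.ofReal_toReal hs, ENNReal.ofReal_toReal ht] at hzero
  refine (hzero.mono_left nhdsWithin_le_nhds).congr' ?_
  filter_upwards [self_mem_nhdsWithin] with ε (hε : 0 < ε)
  rw [ofReal_powerMean hlam (by positivity) (by positivity)]

end PowerMean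

lemma le_ofReal_toReal_add {s : ℝ≥0∞} (hs : s ≠ ⊤) {ε : ℝ} (hε : 0 ≤ ε) :
    s ≤ ENNReal.ofReal (s.toReal + ε) :=
  ENNReal.le_ofReal_iff_toReal_le hs (by positivity) |>.2 (le_add_of_nonneg_right hε)

/-- The length of the part of `K` in `(0, x]`. -/
noncomputable def lengthUpTo (K : Set ℝ) (x : ℝ) : ℝ := volume.real (K ∩ Ioc 0 x)

/-- The smallest `x` such that `K` has length `u` in `(0, x]`: the quantile function of the
length measure on the positive part of `K`. It is meaningful for `u > 0` when `K` has a complement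
of finite length in the half line. -/
noncomputable def lengthQuantile (K : Set ℝ) (u : ℝ) : ℝ := sInf (lengthUpTo K ⁻¹' {u})

section LengthQuantile

variable {K : Set ℝ} {u x y : ℝ}

lemma lengthUpTo_of_nonpos (hx : x ≤ 0) : lengthUpTo K x = 0 := by
  rw [lengthUpTo, Ioc_eq_empty hx.not_gt, inter_empty, measureReal_empty]

lemma lengthUpTo_mono : Monotone (lengthUpTo K) := fun _ _ hxy =>
  measureReal_mono (inter_subset_inter_right _ (Ioc_subset_Ioc_right hxy))
    (measure_ne_top_of_subset inter_subset_right measure_Ioc_lt_top.ne)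

lemma lengthUpTo_le_add (hxy : x ≤ y) : lengthUpTo K y ≤ lengthUpTo K x + (y - x) := by
  have hsub : K ∩ Ioc 0 y ⊆ K ∩ Ioc 0 x ∪ Ioc x y := fun z hz =>
    (le_or_gt z x).imp (fun hzx => ⟨hz.1, hz.2.1, hzx⟩) fun hxz => ⟨hxz, hz.2.2⟩
  have hfin : volume (K ∩ Ioc 0 x ∪ Ioc x y) ≠ ⊤ :=
    measure_union_ne_top (measure_ne_top_of_subset inter_subset_right measure_Ioc_lt_top.ne)
      measure_Ioc_lt_top.ne
  calc lengthUpTo K y ≤ volume.real (K ∩ Ioc 0 x ∪ Ioc x y) := measureReal_mono hsub hfin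
    _ ≤ lengthUpTo K x + volume.real (Ioc x y) := measureReal_union_le _ _
    _ = lengthUpTo K x + (y - x) := by rw [Real.volume_real_Ioc_of_le hxy]

lemma continuous_lengthUpTo : Continuous (lengthUpTo K) := by
  refine (LipschitzWith.of_le_add fun x y => ?_).continuous
  rcases le_total x y with hxy | hyx
  · exact (lengthUpTo_mono hxy).trans (le_add_of_nonneg_right dist_nonneg)
  · rw [Real.dist_eq, abs_of_nonneg (sub_nonneg.2 hyx)]
    exact lengthUpTo_le_add hyx

lemma lengthUpTo_le_self (hx : 0 ≤ x) : lengthUpTo K x ≤ x := by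
  simpa [lengthUpTo_of_nonpos le_rfl] using lengthUpTo_le_add (K := K) hx

lemma le_lengthUpTo_add (hK : volume (Ioi 0 \ K) ≠ ⊤) (hx : 0 ≤ x) :
    x ≤ lengthUpTo K x + volume.real (Ioi 0 \ K) := by
  have hsub : Ioc 0 x ⊆ K ∩ Ioc 0 x ∪ Ioi 0 \ K := fun z hz =>
    (em (z ∈ K)).imp (fun hzK => ⟨hzK, hz⟩) fun hzK => ⟨hz.1, hzK⟩
  have hfin : volume (K ∩ Ioc 0 x ∪ Ioi 0 \ K) ≠ ⊤ :=
    measure_union_ne_top (measure_ne_top_of_subset inter_subset_right measure_Ioc_lt_top.ne) hK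
  calc x = volume.real (Ioc 0 x) := by rw [Real.volume_real_Ioc_of_le hx, sub_zero]
    _ ≤ volume.real (K ∩ Ioc 0 x ∪ Ioi 0 \ K) := measureReal_mono hsub hfin
    _ ≤ lengthUpTo K x + volume.real (Ioi 0 \ K) := measureReal_union_le _ _

lemma isLeast_lengthQuantile (hK : volume (Ioi 0 \ K) ≠ ⊤) (hu : 0 < u) :
    IsLeast (lengthUpTo K ⁻¹' {u}) (lengthQuantile K u) := by
  have hbound : 0 ≤ u + volume.real (Ioi 0 \ K) := by positivity
  have hivt : u ∈ lengthUpTo K '' Icc 0 (u + volume.real (Ioi 0 \ K)) := by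
    refine intermediate_value_Icc hbound continuous_lengthUpTo.continuousOn ⟨?_, ?_⟩
    · rw [lengthUpTo_of_nonpos le_rfl]
      exact hu.le
    · exact le_of_add_le_add_right (le_lengthUpTo_add hK hbound)
  obtain ⟨x, -, hx⟩ := hivt
  refine (isClosed_singleton.preimage continuous_lengthUpTo).isLeast_csInf ⟨x, hx⟩
    ⟨0, fun y hy => ?_⟩
  by_contra! hy0
  exact hu.ne ((lengthUpTo_of_nonpos hy0.le).symm.trans hy)

lemma lengthUpTo_lengthQuantile (hK : volume (Ioi 0 \ K) ≠ ⊤) (hu : 0 < u) :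
    lengthUpTo K (lengthQuantile K u) = u :=
  (isLeast_lengthQuantile hK hu).1

lemma lengthQuantile_pos (hK : volume (Ioi 0 \ K) ≠ ⊤) (hu : 0 < u) :
    0 < lengthQuantile K u := by
  by_contra! h
  exact hu.ne ((lengthUpTo_of_nonpos h).symm.trans (lengthUpTo_lengthQuantile hK hu))

lemma le_lengthQuantile (hK : volume (Ioi 0 \ K) ≠ ⊤) (hu : 0 < u) :
    u ≤ lengthQuantile K u := by
  simpa only [lengthUpTo_lengthQuantile hK hu] using
    lengthUpTo_le_self (K := K) (lengthQuantile_pos hK hu).le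

lemma lengthQuantile_le_add (hK : volume (Ioi 0 \ K) ≠ ⊤) (hu : 0 < u) :
    lengthQuantile K u ≤ u + volume.real (Ioi 0 \ K) := by
  simpa only [lengthUpTo_lengthQuantile hK hu] using
    le_lengthUpTo_add hK (lengthQuantile_pos hK hu).le

lemma lengthQuantile_add_sub_le (hK : volume (Ioi 0 \ K) ≠ ⊤) {v : ℝ} (hu : 0 < u)
    (huv : u ≤ v) : lengthQuantile K u + (v - u) ≤ lengthQuantile K v := by
  have hmono : lengthQuantile K u ≤ lengthQuantile K v := by
    by_contra! h
    have hle := lengthUpTo_mono (K := K) h.le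
    rw [lengthUpTo_lengthQuantile hK hu, lengthUpTo_lengthQuantile hK (hu.trans_le huv)] at hle
    rw [huv.antisymm hle] at h
    exact h.false
  have hgrowth := lengthUpTo_le_add (K := K) hmono
  rw [lengthUpTo_lengthQuantile hK hu, lengthUpTo_lengthQuantile hK (hu.trans_le huv)] at hgrowth
  linarith

lemma lengthQuantile_mem (hKc : IsClosed K) (hK : volume (Ioi 0 \ K) ≠ ⊤) (hu : 0 < u) :
    lengthQuantile K u ∈ K := by
  by_contra hmem
  obtain ⟨x, hx, hgap⟩ := exists_Ioc_subset_of_mem_nhds (hKc.isOpen_compl.mem_nhds hmem)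
    ⟨_, sub_one_lt _⟩
  have hsub : K ∩ Ioc 0 (lengthQuantile K u) ⊆ K ∩ Ioc 0 x := fun z hz =>
    ⟨hz.1, hz.2.1, not_lt.1 fun hxz => hgap ⟨hxz, hz.2.2⟩ hz.1⟩
  have hlength : lengthUpTo K x = lengthUpTo K (lengthQuantile K u) :=
    (lengthUpTo_mono hx.le).antisymm (measureReal_mono hsub
      (measure_ne_top_of_subset inter_subset_right measure_Ioc_lt_top.ne))
  exact hx.not_ge ((isLeast_lengthQuantile hK hu).2
    (hlength.trans (lengthUpTo_lengthQuantile hK hu)))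

end LengthQuantile

lemma volume_le_volume_image_of_sub_le_sub {m : ℝ → ℝ} {s : Set ℝ}
    (hm : ∀ x ∈ s, ∀ y ∈ s, x ≤ y → y - x ≤ m y - m x) : volume s ≤ volume (m '' s) := by
  have hanti : AntilipschitzWith 1 (s.domRestrict m) := by
    refine AntilipschitzWith.of_le_mul_dist fun x y => ?_
    wlog hxy : x ≤ y generalizing x y
    · simpa only [dist_comm] using this y x (le_of_not_ge hxy)
    rw [NNReal.coe_one, one_mul, dist_comm x, dist_comm (s.domRestrict m x), Subtype.dist_eq,
      Real.dist_eq, abs_of_nonneg (sub_nonneg.2 (Subtype.coe_le_coe.2 hxy))]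
    exact (hm x x.2 y y.2 hxy).trans (le_abs_self _)
  have hhausdorff := hanti.le_hausdorffMeasure_image zero_le_one univ
  rwa [← isometry_subtype_coe.hausdorffMeasure_image (.inl zero_le_one), image_univ,
    Subtype.range_coe, image_univ, range_domRestrict, hausdorffMeasure_real, ENNReal.coe_one,
    ENNReal.one_rpow, one_mul] at hhausdorff

lemma measure_Ioi_inter_le_of_forall_Ioc {ν : Measure ℝ} {F : Set ℝ} {C : ℝ≥0∞}
    (h : ∀ u, 0 < u → ν (Ioc 0 u ∩ F) ≤ C) : ν (Ioi 0 ∩ F) ≤ C := by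
  have hunion : Ioi 0 ∩ F = ⋃ k : ℕ, Ioc 0 (k + 1 : ℝ) ∩ F := by
    rw [← iUnion_inter]
    congr 1
    ext x
    simp only [mem_Ioi, mem_iUnion, mem_Ioc, exists_and_left, iff_self_and]
    exact fun _ => (exists_nat_ge x).imp fun k hk => hk.trans (le_add_of_nonneg_right zero_le_one)
  have hmono : Monotone fun k : ℕ => Ioc 0 (k + 1 : ℝ) ∩ F := fun i j hij =>
    inter_subset_inter_left _ (Ioc_subset_Ioc_right (by gcongr))
  rw [hunion, hmono.measure_iUnion]
  exact iSup_le fun k => h _ k.cast_add_one_pos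

section HalfLine

variable {F : Set ℝ}

lemma volume_Ioi_inter_le_of_expanding {m : ℝ → ℝ} {C : ℝ} (hF : MeasurableSet F)
    (hm_expand : ∀ u v, 0 < u → u ≤ v → m u + (v - u) ≤ m v) (hm_ge : ∀ u, 0 < u → u ≤ m u)
    (hm_le : ∀ u, 0 < u → m u ≤ u + C) (hmF : ∀ u, 0 < u → m u ∉ F) :
    volume (Ioi 0 ∩ F) ≤ ENNReal.ofReal C := by
  refine measure_Ioi_inter_le_of_forall_Ioc fun u hu => ?_
  have hm_image : m '' Ioc 0 u ⊆ Ioc 0 (m u) \ F := by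
    rintro _ ⟨x, hx, rfl⟩
    exact ⟨⟨hx.1.trans_le (hm_ge x hx.1), by linarith [hm_expand x u hx.1 hx.2, hx.2]⟩,
      hmF x hx.1⟩
  have hu_le : ENNReal.ofReal u ≤ volume (m '' Ioc 0 u) := by
    rw [← sub_zero u, ← Real.volume_Ioc, sub_zero]
    exact volume_le_volume_image_of_sub_le_sub fun x hx y _ hxy => by
      linarith [hm_expand x y hx.1 hxy]
  have hlength : volume (Ioc 0 (m u) ∩ F) + ENNReal.ofReal u ≤ ENNReal.ofReal (m u) := by
    calc volume (Ioc 0 (m u) ∩ F) + ENNReal.ofReal u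
        ≤ volume (Ioc 0 (m u) ∩ F) + volume (Ioc 0 (m u) \ F) := by
          gcongr
          exact hu_le.trans (measure_mono hm_image)
      _ = ENNReal.ofReal (m u) := by
          rw [measure_inter_add_sdiff _ hF, Real.volume_Ioc, sub_zero]
  calc volume (Ioc 0 u ∩ F) ≤ volume (Ioc 0 (m u) ∩ F) := by
        gcongr
        exact hm_ge u hu
    _ ≤ ENNReal.ofReal (m u) - ENNReal.ofReal u :=
        ENNReal.le_sub_of_add_le_right ENNReal.ofReal_ne_top hlength
    _ = ENNReal.ofReal (m u - u) := (ENNReal.ofReal_sub _ hu.le).symm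
    _ ≤ ENNReal.ofReal C := ENNReal.ofReal_le_ofReal (sub_le_iff_le_add'.2 (hm_le u hu))

variable {q lam : ℝ}

lemma volume_Ioi_inter_le_of_isClosed_of_powerMean_notMem (hq0 : q ≠ 0) (hq1 : q ≤ 1)
    (hlam : lam ∈ Icc (0 : ℝ) 1) (hF : MeasurableSet F) {K L : Set ℝ} (hK : IsClosed K)
    (hL : IsClosed L) (hKfin : volume (Ioi 0 \ K) ≠ ⊤) (hLfin : volume (Ioi 0 \ L) ≠ ⊤)
    (hKL : ∀ a ∈ K, ∀ b ∈ L, 0 < a → 0 < b → powerMean q lam a b ∉ F) :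
    volume (Ioi 0 ∩ F) ≤
      ENNReal.ofReal (lam * volume.real (Ioi 0 \ K) + (1 - lam) * volume.real (Ioi 0 \ L)) := by
  refine volume_Ioi_inter_le_of_expanding
    (m := fun u => powerMean q lam (lengthQuantile K u) (lengthQuantile L u)) hF
    (fun u v hu huv => ?_) (fun u hu => ?_) (fun u hu => ?_) (fun u hu => ?_)
  all_goals
    have ha := lengthQuantile_pos hKfin hu
    have hb := lengthQuantile_pos hLfin hu
  · exact powerMean_add_le_of_add_le hq0 hq1 hlam ha hb (sub_nonneg.2 huv)
      (lengthQuantile_add_sub_le hKfin hu huv) (lengthQuantile_add_sub_le hLfin hu huv)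
  · calc u = powerMean q lam u u := (powerMean_self hq0 hu.le).symm
      _ ≤ powerMean q lam (lengthQuantile K u) (lengthQuantile L u) :=
          powerMean_le_powerMean hq0 hlam hu hu (le_lengthQuantile hKfin hu)
            (le_lengthQuantile hLfin hu)
  · calc powerMean q lam (lengthQuantile K u) (lengthQuantile L u)
        ≤ lam * lengthQuantile K u + (1 - lam) * lengthQuantile L u :=
          powerMean_le_arith_mean hq0 hq1 hlam ha hb
      _ ≤ lam * (u + volume.real (Ioi 0 \ K)) + (1 - lam) * (u + volume.real (Ioi 0 \ L)) :=
          add_le_add (mul_le_mul_of_nonneg_left (lengthQuantile_le_add hKfin hu) hlam.1)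
            (mul_le_mul_of_nonneg_left (lengthQuantile_le_add hLfin hu) (sub_nonneg.2 hlam.2))
      _ = u + (lam * volume.real (Ioi 0 \ K) + (1 - lam) * volume.real (Ioi 0 \ L)) := by ring
  · exact hKL _ (lengthQuantile_mem hK hKfin hu) _ (lengthQuantile_mem hL hLfin hu) ha hb

lemma exists_isClosed_inter_Ioi_subset (A : Set ℝ) {ε : ℝ≥0∞} (hε : ε ≠ 0) :
    ∃ K, IsClosed K ∧ K ∩ Ioi 0 ⊆ A ∧ volume (Ioi 0 \ K) ≤ volume (Ioi 0 \ A) + ε := by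
  obtain ⟨U, hAU, hU, hUε⟩ := (Ioi 0 \ A).exists_isOpen_le_add volume hε
  refine ⟨Uᶜ, hU.isClosed_compl, fun x hx => ?_, (measure_mono ?_).trans hUε⟩
  · by_contra hxA
    exact hx.1 (hAU ⟨hx.2, hxA⟩)
  · rw [sdiff_compl]
    exact inter_subset_right

lemma volume_Ioi_inter_le_of_powerMean_notMem (hq0 : q ≠ 0) (hq1 : q ≤ 1)
    (hlam : lam ∈ Ioo (0 : ℝ) 1) (hF : MeasurableSet F) {A B : Set ℝ}
    (hAB : ∀ a ∈ A, ∀ b ∈ B, 0 < a → 0 < b → powerMean q lam a b ∉ F) :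
    volume (Ioi 0 ∩ F) ≤ ENNReal.ofReal lam * volume (Ioi 0 \ A) +
      ENNReal.ofReal (1 - lam) * volume (Ioi 0 \ B) := by
  have hlam0 := hlam.1
  have hlam1 : 0 < 1 - lam := sub_pos.2 hlam.2
  rcases eq_or_ne (volume (Ioi 0 \ A)) ⊤ with hA | hA
  · simp [hA, hlam0]
  rcases eq_or_ne (volume (Ioi 0 \ B)) ⊤ with hB | hB
  · simp [hB, hlam.2]
  refine ENNReal.le_of_forall_pos_le_add fun ε hε _ => ?_
  have hε0 : (ε : ℝ≥0∞) ≠ 0 := by exact_mod_cast hε.ne'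
  obtain ⟨K, hK, hKA, hKε⟩ := exists_isClosed_inter_Ioi_subset A hε0
  obtain ⟨L, hL, hLB, hLε⟩ := exists_isClosed_inter_Ioi_subset B hε0
  have hKfin : volume (Ioi 0 \ K) ≠ ⊤ := ne_top_of_le_ne_top (by finiteness) hKε
  have hLfin : volume (Ioi 0 \ L) ≠ ⊤ := ne_top_of_le_ne_top (by finiteness) hLε
  calc volume (Ioi 0 ∩ F)
      ≤ ENNReal.ofReal
          (lam * volume.real (Ioi 0 \ K) + (1 - lam) * volume.real (Ioi 0 \ L)) :=
        volume_Ioi_inter_le_of_isClosed_of_powerMean_notMem hq0 hq1 (Ioo_subset_Icc_self hlam) hF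
          hK hL hKfin hLfin fun a ha b hb ha0 hb0 =>
            hAB a (hKA ⟨ha, ha0⟩) b (hLB ⟨hb, hb0⟩) ha0 hb0
    _ = ENNReal.ofReal lam * volume (Ioi 0 \ K) +
          ENNReal.ofReal (1 - lam) * volume (Ioi 0 \ L) := by
        rw [ENNReal.ofReal_add (by positivity) (by positivity), ENNReal.ofReal_mul hlam0.le,
          ENNReal.ofReal_mul hlam1.le, ofReal_measureReal hKfin, ofReal_measureReal hLfin]
    _ ≤ ENNReal.ofReal lam * (volume (Ioi 0 \ A) + ε) +
          ENNReal.ofReal (1 - lam) * (volume (Ioi 0 \ B) + ε) := by gcongr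
    _ = ENNReal.ofReal lam * volume (Ioi 0 \ A) + ENNReal.ofReal (1 - lam) * volume (Ioi 0 \ B) +
          (ENNReal.ofReal lam + ENNReal.ofReal (1 - lam)) * ε := by ring
    _ = ENNReal.ofReal lam * volume (Ioi 0 \ A) +
          ENNReal.ofReal (1 - lam) * volume (Ioi 0 \ B) + ε := by
        rw [← ENNReal.ofReal_add hlam0.le hlam1.le, add_sub_cancel, ENNReal.ofReal_one, one_mul]

end HalfLine

/-- The measure `μ` is `q`-homogeneous, that is, homogeneous of degree `1 / q` under positive
dilations. It is meaningful for `q ≠ 0`. -/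
def IsHomogeneousMeasure {E : Type*} [SMul ℝ E] [MeasurableSpace E] (q : ℝ) (μ : Measure E) :
    Prop :=
  ∀ A : Set E, MeasurableSet A → ∀ c : ℝ, 0 < c →
    μ (c • A) = ENNReal.ofReal (c ^ (1 / q)) * μ A

namespace IsHomogeneousMeasure

section Dilation

variable {E : Type*} [AddCommGroup E] [Module ℝ E] [MeasurableSpace E] {q v : ℝ} {μ : Measure E}

lemma measure_rpow_smul (hμ : IsHomogeneousMeasure q μ) (hq0 : q ≠ 0) (hv : 0 < v) {A : Set E}
    (hA : MeasurableSet A) : μ (v ^ q • A) = ENNReal.ofReal v * μ A := by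
  rw [hμ A hA _ (Real.rpow_pos_of_pos hv q), one_div, Real.rpow_rpow_inv hv.le hq0]

lemma measure_singleton_zero [MeasurableSingletonClass E] [SigmaFinite μ]
    (hμ : IsHomogeneousMeasure q μ) (hq0 : q ≠ 0) : μ {0} = 0 := by
  have hdouble := hμ.measure_rpow_smul hq0 two_pos (measurableSet_singleton 0)
  rw [smul_set_singleton, smul_zero, ENNReal.ofReal_ofNat, two_mul] at hdouble
  exact (ENNReal.add_right_inj (measure_singleton_lt_top (a := (0 : E))).ne).1
    (hdouble.symm.trans (add_zero _).symm)

lemma measure_compl_rpow_smul_le (hμ : IsHomogeneousMeasure q μ) (hq0 : q ≠ 0) {M γ : ℝ}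
    (hM : 0 < M) (hγ : 0 < γ) {A : Set E} (hA : MeasurableSet A)
    (hAγ : μ Aᶜ ≤ ENNReal.ofReal γ) : μ ((M / γ) ^ q • A)ᶜ ≤ ENNReal.ofReal M := by
  have hc : (M / γ) ^ q ≠ 0 := by positivity
  have hcompl : ((M / γ) ^ q • A)ᶜ = (M / γ) ^ q • Aᶜ :=
    (image_compl_eq (MulAction.bijective₀ hc)).symm
  calc μ ((M / γ) ^ q • A)ᶜ = ENNReal.ofReal (M / γ) * μ Aᶜ := by
        rw [hcompl, hμ.measure_rpow_smul hq0 (by positivity) hA.compl]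
    _ ≤ ENNReal.ofReal (M / γ) * ENNReal.ofReal γ := by gcongr
    _ = ENNReal.ofReal M := by
        rw [← ENNReal.ofReal_mul (by positivity), div_mul_cancel₀ _ hγ.ne']

variable [MeasurableConstSMul ℝ E]

lemma map_rpow_smul (hμ : IsHomogeneousMeasure q μ) (hq0 : q ≠ 0) (hv : 0 < v) :
    μ.map (fun x => v ^ q • x) = ENNReal.ofReal v⁻¹ • μ := by
  ext A hA
  rw [Measure.map_apply (measurable_const_smul _) hA,
    preimage_smul₀ (Real.rpow_pos_of_pos hv q).ne', ← Real.inv_rpow hv.le,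
    hμ.measure_rpow_smul hq0 (inv_pos.2 hv) hA, Measure.smul_apply, smul_eq_mul]

lemma lintegral_rpow_smul (hμ : IsHomogeneousMeasure q μ) (hq0 : q ≠ 0) (hv : 0 < v)
    {f : E → ℝ≥0∞} (hf : Measurable f) :
    ∫⁻ x, f (v ^ q • x) ∂μ = ENNReal.ofReal v⁻¹ * ∫⁻ x, f x ∂μ := by
  rw [← lintegral_map hf (measurable_const_smul _), hμ.map_rpow_smul hq0 hv, lintegral_smul_measure,
    smul_eq_mul]

lemma lintegral_mul_inv_rpow_smul (hμ : IsHomogeneousMeasure q μ) (hq0 : q ≠ 0) (hv : 0 < v)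
    {f g : E → ℝ≥0∞} (hf : Measurable f) (hg : Measurable g) :
    ∫⁻ x, f x * (ENNReal.ofReal v⁻¹ * g (v⁻¹ ^ q • x)) ∂μ = ∫⁻ y, g y * f (v ^ q • y) ∂μ := by
  have hfg : Measurable fun x => f x * g (v⁻¹ ^ q • x) :=
    hf.mul (hg.comp (measurable_const_smul _))
  have hinv : ∀ y : E, v⁻¹ ^ q • v ^ q • y = y := fun y => by
    rw [Real.inv_rpow hv.le, inv_smul_smul₀ (Real.rpow_pos_of_pos hv q).ne']
  calc ∫⁻ x, f x * (ENNReal.ofReal v⁻¹ * g (v⁻¹ ^ q • x)) ∂μ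
      = ENNReal.ofReal v⁻¹ * ∫⁻ x, f x * g (v⁻¹ ^ q • x) ∂μ := by
        rw [← lintegral_const_mul _ hfg]
        exact lintegral_congr fun x => mul_left_comm _ _ _
    _ = ∫⁻ y, f (v ^ q • y) * g (v⁻¹ ^ q • v ^ q • y) ∂μ :=
        (hμ.lintegral_rpow_smul hq0 hv hfg).symm
    _ = ∫⁻ y, g y * f (v ^ q • y) ∂μ := lintegral_congr fun y => by rw [hinv, mul_comm]

end Dilation

end IsHomogeneousMeasure

/-- The density, with respect to a `q`-homogeneous measure, of a spherical part of that measure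
(see `IsHomogeneousMeasure.exists_polar_decomposition`). It is the function of the norm whose
integral along each ray is `1`, in the sense of `lintegral_sphericalDensity`. -/
noncomputable def sphericalDensity {E : Type*} [Norm E] (q : ℝ) : E → ℝ≥0∞ :=
  {y | 1 ≤ ‖y‖ ^ (1 / q)}.indicator fun y => ENNReal.ofReal (‖y‖ ^ (1 / q))⁻¹

lemma measurable_sphericalDensity {E : Type*} [NormedAddCommGroup E] [MeasurableSpace E]
    [OpensMeasurableSpace E] {q : ℝ} : Measurable (sphericalDensity q : E → ℝ≥0∞) := by
  have hnorm : Measurable fun y : E => ‖y‖ ^ (1 / q) := measurable_norm.pow_const _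
  exact hnorm.inv.ennreal_ofReal.indicator (measurableSet_le measurable_const hnorm)

section PolarCoordinates

variable {E : Type*} [NormedAddCommGroup E] [NormedSpace ℝ E] {q : ℝ}

lemma norm_rpow_smul_rpow {v : ℝ} (hq0 : q ≠ 0) (hv : 0 < v) (x : E) :
    ‖v ^ q • x‖ ^ (1 / q) = v * ‖x‖ ^ (1 / q) := by
  rw [norm_smul, Real.norm_of_nonneg (by positivity),
    Real.mul_rpow (by positivity) (norm_nonneg x), one_div, Real.rpow_rpow_inv hv.le hq0]

lemma ofReal_inv_mul_sphericalDensity {v : ℝ} (hq0 : q ≠ 0) (hv : 0 < v) (x : E) :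
    ENNReal.ofReal v⁻¹ * sphericalDensity q (v⁻¹ ^ q • x) =
      (Iic (‖x‖ ^ (1 / q))).indicator (fun _ => ENNReal.ofReal (‖x‖ ^ (1 / q))⁻¹) v := by
  have hmem : 1 ≤ v⁻¹ * ‖x‖ ^ (1 / q) ↔ v ∈ Iic (‖x‖ ^ (1 / q)) := one_le_inv_mul₀ hv
  simp only [sphericalDensity, indicator_apply, mem_ofPred_eq,
    norm_rpow_smul_rpow hq0 (inv_pos.2 hv), hmem, mul_ite, mul_zero]
  congr 1
  rw [← ENNReal.ofReal_mul (by positivity), mul_inv, inv_inv, inv_mul_cancel_left₀ hv.ne']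

lemma lintegral_sphericalDensity (hq0 : q ≠ 0) {x : E} (hx : x ≠ 0) :
    ∫⁻ v in Ioi (0 : ℝ), ENNReal.ofReal v⁻¹ * sphericalDensity q (v⁻¹ ^ q • x) = 1 := by
  have hρ : 0 < ‖x‖ ^ (1 / q) := by positivity
  rw [setLIntegral_congr_fun measurableSet_Ioi fun v hv =>
      ofReal_inv_mul_sphericalDensity hq0 hv x,
    lintegral_indicator_const measurableSet_Iic, Measure.restrict_apply measurableSet_Iic,
    Iic_inter_Ioi, Real.volume_Ioc, sub_zero, ← ENNReal.ofReal_mul (by positivity),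
    inv_mul_cancel₀ hρ.ne', ENNReal.ofReal_one]

end PolarCoordinates

section Ray

variable {E : Type*} [AddCommGroup E] [Module ℝ E] [MeasurableSpace E] [MeasurableSMul₂ ℝ E]
  {A : Set E}

lemma measurable_volume_ray (q : ℝ) (hA : MeasurableSet A) :
    Measurable fun y : E => volume (Ioi 0 ∩ {v : ℝ | v ^ q • y ∈ A}) := by
  have hcone : MeasurableSet {p : E × ℝ | 0 < p.2 ∧ p.2 ^ q • p.1 ∈ A} :=
    (measurableSet_lt measurable_const measurable_snd).inter
      (((measurable_snd.pow_const q).smul measurable_fst) hA)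
  exact measurable_measure_prodMk_left hcone

lemma measurableSet_ray (q : ℝ) (y : E) (hA : MeasurableSet A) :
    MeasurableSet {v : ℝ | v ^ q • y ∈ A} :=
  ((measurable_id.pow_const q).smul_const y) hA

end Ray

section ComplementedConcavity

variable {E : Type*} [NormedAddCommGroup E] [NormedSpace ℝ E] [MeasurableSpace E]
  [OpensMeasurableSpace E] [MeasurableSMul₂ ℝ E] {q lam : ℝ} {μ : Measure E} [SigmaFinite μ]

namespace IsHomogeneousMeasure

lemma lintegral_eq_lintegral_ray (hμ : IsHomogeneousMeasure q μ) (hq0 : q ≠ 0)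
    {f : E → ℝ≥0∞} (hf : Measurable f) :
    ∫⁻ x, f x ∂μ =
      ∫⁻ y, sphericalDensity q y * (∫⁻ v in Ioi (0 : ℝ), f (v ^ q • y)) ∂μ := by
  have hψ := measurable_sphericalDensity (E := E) (q := q)
  have hmeas : Measurable fun p : E × ℝ => sphericalDensity q p.1 * f (p.2 ^ q • p.1) := by
    fun_prop
  have hmeas' : Measurable fun p : E × ℝ =>
      f p.1 * (ENNReal.ofReal p.2⁻¹ * sphericalDensity q (p.2⁻¹ ^ q • p.1)) := by fun_prop
  have hne : ∀ᵐ x ∂μ, x ≠ 0 := by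
    simpa [ae_iff] using hμ.measure_singleton_zero hq0
  calc ∫⁻ x, f x ∂μ
      = ∫⁻ x, (∫⁻ v in Ioi (0 : ℝ),
          f x * (ENNReal.ofReal v⁻¹ * sphericalDensity q (v⁻¹ ^ q • x))) ∂μ := by
        refine lintegral_congr_ae (hne.mono fun x hx => ?_)
        beta_reduce
        rw [lintegral_const_mul _ (by fun_prop), lintegral_sphericalDensity hq0 hx, mul_one]
    _ = ∫⁻ v in Ioi (0 : ℝ), ∫⁻ x,
          f x * (ENNReal.ofReal v⁻¹ * sphericalDensity q (v⁻¹ ^ q • x)) ∂μ :=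
        lintegral_lintegral_swap hmeas'.aemeasurable
    _ = ∫⁻ v in Ioi (0 : ℝ), ∫⁻ y, sphericalDensity q y * f (v ^ q • y) ∂μ :=
        setLIntegral_congr_fun measurableSet_Ioi fun v hv =>
          hμ.lintegral_mul_inv_rpow_smul hq0 hv hf hψ
    _ = ∫⁻ y, (∫⁻ v in Ioi (0 : ℝ), sphericalDensity q y * f (v ^ q • y)) ∂μ :=
        (lintegral_lintegral_swap hmeas.aemeasurable).symm
    _ = ∫⁻ y, sphericalDensity q y * (∫⁻ v in Ioi (0 : ℝ), f (v ^ q • y)) ∂μ :=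
        lintegral_congr fun y => lintegral_const_mul _ (by fun_prop)

lemma exists_polar_decomposition (hμ : IsHomogeneousMeasure q μ) (hq0 : q ≠ 0) :
    ∃ σ : Measure E, ∀ A, MeasurableSet A →
      μ A = ∫⁻ y, volume (Ioi 0 ∩ {v : ℝ | v ^ q • y ∈ A}) ∂σ := by
  refine ⟨μ.withDensity (sphericalDensity q), fun A hA => ?_⟩
  have hray : ∀ y : E, ∫⁻ v in Ioi (0 : ℝ), A.indicator 1 (v ^ q • y) =
      volume (Ioi 0 ∩ {v : ℝ | v ^ q • y ∈ A}) := fun y => by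
    rw [inter_comm, ← Measure.restrict_apply (measurableSet_ray q y hA),
      ← lintegral_indicator_one (measurableSet_ray q y hA)]
    rfl
  calc μ A = ∫⁻ x, A.indicator 1 x ∂μ := (lintegral_indicator_one hA).symm
    _ = ∫⁻ y, sphericalDensity q y * volume (Ioi 0 ∩ {v : ℝ | v ^ q • y ∈ A}) ∂μ := by
        rw [hμ.lintegral_eq_lintegral_ray hq0 (measurable_one.indicator hA)]
        simp only [hray]
    _ = ∫⁻ y, volume (Ioi 0 ∩ {v : ℝ | v ^ q • y ∈ A}) ∂μ.withDensity (sphericalDensity q) :=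
        (lintegral_withDensity_eq_lintegral_mul _ measurable_sphericalDensity
          (measurable_volume_ray q hA)).symm

variable {F A B : Set E}

lemma measure_le_arith_mean (hμ : IsHomogeneousMeasure q μ) (hq0 : q ≠ 0) (hq1 : q ≤ 1)
    (hlam : lam ∈ Ioo (0 : ℝ) 1) (hF : MeasurableSet F) (hA : MeasurableSet A)
    (hB : MeasurableSet B) (hFAB : F ⊆ (lam • A + (1 - lam) • B)ᶜ) :
    μ F ≤ ENNReal.ofReal lam * μ Aᶜ + ENNReal.ofReal (1 - lam) * μ Bᶜ := by
  obtain ⟨σ, hσ⟩ := hμ.exists_polar_decomposition hq0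
  have hray : ∀ y : E, volume (Ioi 0 ∩ {v : ℝ | v ^ q • y ∈ F}) ≤
      ENNReal.ofReal lam * volume (Ioi 0 ∩ {v : ℝ | v ^ q • y ∈ Aᶜ}) +
        ENNReal.ofReal (1 - lam) * volume (Ioi 0 ∩ {v : ℝ | v ^ q • y ∈ Bᶜ}) := by
    intro y
    refine volume_Ioi_inter_le_of_powerMean_notMem hq0 hq1 hlam (measurableSet_ray q y hF)
      (A := {v | v ^ q • y ∈ A}) (B := {v | v ^ q • y ∈ B}) fun a ha b hb ha0 hb0 hab => ?_
    refine hFAB hab (mem_add.2 ⟨_, smul_mem_smul_set ha, _, smul_mem_smul_set hb, ?_⟩)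
    rw [powerMean_rpow hq0 (Ioo_subset_Icc_self hlam) ha0 hb0, add_smul, mul_smul, mul_smul]
  rw [hσ F hF, hσ Aᶜ hA.compl, hσ Bᶜ hB.compl,
    ← lintegral_const_mul _ (measurable_volume_ray q hA.compl),
    ← lintegral_const_mul _ (measurable_volume_ray q hB.compl),
    ← lintegral_add_left ((measurable_volume_ray q hA.compl).const_mul _)]
  exact lintegral_mono hray

lemma measure_le_powerMean (hμ : IsHomogeneousMeasure q μ) (hq0 : q ≠ 0) (hq1 : q ≤ 1)
    (hlam : lam ∈ Ioo (0 : ℝ) 1) (hF : MeasurableSet F) (hA : MeasurableSet A)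
    (hB : MeasurableSet B) (hFAB : F ⊆ (lam • A + (1 - lam) • B)ᶜ) {α β : ℝ} (hα : 0 < α)
    (hβ : 0 < β) (hAα : μ Aᶜ ≤ ENNReal.ofReal α) (hBβ : μ Bᶜ ≤ ENNReal.ofReal β) :
    μ F ≤ ENNReal.ofReal (powerMean q lam α β) := by
  have hlam0 := hlam.1
  have hlam1 : 0 < 1 - lam := sub_pos.2 hlam.2
  have hM := powerMean_pos (q := q) (Ioo_subset_Icc_self hlam) hα hβ
  have hMq := powerMean_rpow hq0 (Ioo_subset_Icc_self hlam) hα hβ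
  set M := powerMean q lam α β
  set r := lam * (α / M) ^ q with hr
  have hr_compl : 1 - r = (1 - lam) * (β / M) ^ q := by
    rw [hr, Real.div_rpow hα.le hM.le, Real.div_rpow hβ.le hM.le]
    field_simp
    linear_combination hMq
  have hr0 : 0 < r := by positivity
  have hr1 : 0 < 1 - r := by rw [hr_compl]; positivity
  have hcancel : ∀ γ : ℝ, 0 < γ → (γ / M) ^ q * (M / γ) ^ q = 1 := fun γ hγ => by
    rw [← Real.mul_rpow (by positivity) (by positivity), div_mul_div_cancel₀ hM.ne',
      div_self hγ.ne', Real.one_rpow]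
  have hdilate : r • (M / α) ^ q • A + (1 - r) • (M / β) ^ q • B = lam • A + (1 - lam) • B := by
    rw [smul_smul, smul_smul, hr_compl, hr, mul_assoc, mul_assoc, hcancel α hα, hcancel β hβ,
      mul_one, mul_one]
  calc μ F ≤ ENNReal.ofReal r * μ ((M / α) ^ q • A)ᶜ +
          ENNReal.ofReal (1 - r) * μ ((M / β) ^ q • B)ᶜ :=
        hμ.measure_le_arith_mean hq0 hq1 ⟨hr0, sub_pos.1 hr1⟩ hF
          (hA.const_smul_of_ne_zero (by positivity)) (hB.const_smul_of_ne_zero (by positivity))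
          (hdilate ▸ hFAB)
    _ ≤ ENNReal.ofReal r * ENNReal.ofReal M + ENNReal.ofReal (1 - r) * ENNReal.ofReal M := by
        gcongr
        · exact hμ.measure_compl_rpow_smul_le hq0 hM hα hA hAα
        · exact hμ.measure_compl_rpow_smul_le hq0 hM hβ hB hBβ
    _ = ENNReal.ofReal M := by
        rw [← add_mul, ← ENNReal.ofReal_add hr0.le hr1.le, add_sub_cancel, ENNReal.ofReal_one,
          one_mul]

end IsHomogeneousMeasure

end ComplementedConcavity

theorem stmt12_general {E : Type*} [NormedAddCommGroup E] [NormedSpace ℝ E] [MeasurableSpace E]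
    [OpensMeasurableSpace E] [MeasurableSMul₂ ℝ E] {q : ℝ} (hq0 : q ≠ 0) (hq1 : q ≤ 1)
    {μ : Measure E} [SigmaFinite μ] (hμ : IsHomogeneousMeasure q μ) {lam : ℝ}
    (hlam : lam ∈ Ioo (0 : ℝ) 1) {A B : Set E} (hA : MeasurableSet A) (hB : MeasurableSet B)
    (hAfin : μ Aᶜ ≠ ⊤) (hBfin : μ Bᶜ ≠ ⊤) :
    innerMeasure μ ((lam • A + (1 - lam) • B)ᶜ) ≤
      (ENNReal.ofReal lam * μ Aᶜ ^ q + ENNReal.ofReal (1 - lam) * μ Bᶜ ^ q) ^ (1 / q) := by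
  refine iSup_le fun F => iSup_le fun hF => iSup_le fun hFAB => ?_
  refine ge_of_tendsto (tendsto_ofReal_powerMean_add (Ioo_subset_Icc_self hlam) hAfin hBfin) ?_
  filter_upwards [self_mem_nhdsWithin] with ε (hε : 0 < ε)
  exact hμ.measure_le_powerMean hq0 hq1 hlam hF hA hB hFAB (by positivity) (by positivity)
    (le_ofReal_toReal_add hAfin hε.le) (le_ofReal_toReal_add hBfin hε.le)

/-- every σ-finite `q`-homogeneous Borel measure on `ℝⁿ`, `q ≤ 1`, `q ≠ 0`,
is `q`-complemented concave. -/
theorem stmt12 (n : ℕ) (hn : 1 ≤ n) (q : ℝ) (hq0 : q ≠ 0) (hq1 : q ≤ 1)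
    (μ : Measure (Fin n → ℝ)) (hσ : SigmaFinite μ)
    (hhom : ∀ A : Set (Fin n → ℝ), MeasurableSet A → ∀ c : ℝ, 0 < c →
      μ (c • A) = ENNReal.ofReal (c ^ (1 / q)) * μ A) :
    ∀ lam ∈ Set.Ioo (0 : ℝ) 1, ∀ A B : Set (Fin n → ℝ),
      MeasurableSet A → MeasurableSet B → μ Aᶜ < ⊤ → μ Bᶜ < ⊤ →
      innerMeasure μ ((lam • A + (1 - lam) • B)ᶜ) ≤
        (ENNReal.ofReal lam * μ Aᶜ ^ q + ENNReal.ofReal (1 - lam) * μ Bᶜ ^ q) ^ (1 / q) := by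
  intro lam hlam A B hA hB hAfin hBfin
  exact stmt12_general hq0 hq1 hhom hlam hA hB hAfin.ne hBfin.ne
end

section
/- Let φ : (0,∞) → [0,∞) be non-increasing, lower semi-continuous, non-integrable at the origin (∫₀¹ φ = ∞) and integrable at infinity (∫₁^∞ φ < ∞), and let μ be the measure φ(t)dt on ℝ₊ = [0,∞). Set Φ(t) := ∫_t^∞ φ(s)ds for t > 0, with generalized inverse Φ⁻¹(v) := inf{t > 0 : Φ(t) ≤ v}, and let B = [0,b] for some b > 0. Then for every Borel set C ⊆ ℝ₊ with μ(C) < ∞, μ⁻_B(C) ≥ b·φ(Φ⁻¹(μ(C))), with the convention φ(∞) = 0. -/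
open MeasureTheory Set Filter
open scoped Pointwise ENNReal Topology

/-- One-dimensional (outer) Minkowski boundary measure of `A` with respect to `B`:
`μ⁺_B(A) := liminf_{ε → 0⁺} μ((A + εB) \ A) / ε`. -/
noncomputable def bdry1 (μ : Measure ℝ) (B A : Set ℝ) : ℝ≥0∞ :=
  Filter.liminf (fun ε : ℝ => μ ((A + ε • B) \ A) / ENNReal.ofReal ε) (𝓝[>] (0 : ℝ))

/-- Generalized inverse `Φ⁻¹(v) = inf {t > 0 : Φ(t) ≤ v}`, valued in `ℝ≥0∞`
(so an empty set gives `∞`). -/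
noncomputable def genInvE (Φ : ℝ → ℝ) (v : ℝ) : ℝ≥0∞ :=
  ⨅ (t : ℝ) (_ : 0 < t) (_ : Φ t ≤ v), ENNReal.ofReal t

/-- Extension of a function `φ : ℝ → ℝ` to `ℝ≥0∞` arguments, with the convention
`φ(∞) = 0`. -/
noncomputable def phiE (φ : ℝ → ℝ) (s : ℝ≥0∞) : ℝ :=
  if s = ⊤ then 0 else φ s.toReal

/-!
Let `S` be the layer added to `ℝ₊ \ C` by `[0, h]`, so that `C \ S` is the erosion `K` of `C`. Since
every neighbourhood of the origin has infinite mass, `K` stays at distance more than `h` from it.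
If `K` meets `(0, t]`, say at `x`, the one-dimensional Brunn-Minkowski inequality applied to
`K ∩ (0, x]` shows that `S ∩ (0, x]` has length at least `h`, hence mass at least `h φ(t)`.
Otherwise `S` contains `C ∩ (0, t]`, whose mass is at least the fixed amount `μ(C) - μ(t, ∞)`, which
is positive once `t > Φ⁻¹(μ(C))` and `φ(t) > 0`. For `h = ε b` with `ε` small both cases give
`μ(S) ≥ ε b φ(t)`, and lower semicontinuity allows `t ↓ Φ⁻¹(μ(C))`.
-/

/-- The erosion of `C` in `ℝ₊` by the window `[0, h]`: the points all of whose nonnegative left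
neighbours at distance at most `h` lie in `C`. Its complement in `C ∩ ℝ₊` is the layer which
`[0, h]` adds to `ℝ₊ \ C`. Negative points belong to it vacuously; only its part in `ℝ₊` matters. -/
def erosion (h : ℝ) (C : Set ℝ) : Set ℝ :=
  {x | Icc (x - h) x ∩ Ici 0 ⊆ C}

lemma Ici_diff_add_Icc_diff (C : Set ℝ) (h : ℝ) :
    (Ici 0 \ C + Icc 0 h) \ (Ici 0 \ C) = (C ∩ Ici 0) \ erosion h C := by
  ext x
  constructor
  · rintro ⟨⟨y, ⟨hy0, hyC⟩, z, ⟨hz0, hzh⟩, rfl⟩, hx⟩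
    have hx0 : 0 ≤ y + z := add_nonneg hy0 hz0
    refine ⟨⟨of_not_not fun hxC => hx ⟨hx0, hxC⟩, hx0⟩, fun hE => hyC (hE ⟨?_, hy0⟩)⟩
    constructor <;> linarith
  · rintro ⟨⟨hxC, -⟩, hE⟩
    obtain ⟨y, ⟨⟨hxy, hyx⟩, hy0⟩, hyC⟩ := not_subset.1 hE
    refine ⟨⟨y, ⟨hy0, hyC⟩, x - y, ⟨sub_nonneg.2 hyx, by linarith⟩, ?_⟩, fun hx => hx.2 hxC⟩
    exact add_sub_cancel y x

lemma volume_add_ofReal_le_volume_sub_Icc {K : Set ℝ} {x h : ℝ} (hx : IsGreatest K x)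
    (hh : 0 ≤ h) : volume K + ENNReal.ofReal h ≤ volume (K - Icc 0 h) := by
  have disjoint : Disjoint ((· + h) ⁻¹' K) (Ioc (x - h) x) :=
    disjoint_left.2 fun y hyK hy => by linarith [hx.2 hyK, hy.1]
  calc volume K + ENNReal.ofReal h
      = volume ((· + h) ⁻¹' K ∪ Ioc (x - h) x) := by
        rw [measure_union disjoint measurableSet_Ioc, measure_preimage_add_right,
          Real.volume_Ioc, sub_sub_cancel]
    _ ≤ volume (K - Icc 0 h) := by
        refine measure_mono (union_subset (fun y hy => ?_) fun y hy => ?_)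
        · exact ⟨y + h, hy, h, right_mem_Icc.2 hh, add_sub_cancel_right y h⟩
        · exact ⟨x, hx.1, x - y, ⟨sub_nonneg.2 hy.2, by linarith [hy.1]⟩, sub_sub_cancel x y⟩

lemma le_of_lowerSemicontinuousAt_of_forall_gt {α β : Type*} [TopologicalSpace α]
    [Preorder α] [LinearOrder β] {f : α → β} {t : α} {m : β} [(𝓝[>] t).NeBot]
    (hf : LowerSemicontinuousAt f t) (hm : ∀ s, t < s → f s ≤ m) : f t ≤ m := by
  by_contra! hlt
  obtain ⟨s, hs, hts⟩ := (((hf m hlt).filter_mono nhdsWithin_le_nhds).and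
    (self_mem_nhdsWithin : Ioi t ∈ 𝓝[>] t)).exists
  exact (hm s hts).not_gt hs

section Layer

variable {μ : Measure ℝ} {C : Set ℝ} {h x : ℝ}

lemma lt_of_mem_erosion (hμ0 : ∀ y, 0 < y → μ (Ioo 0 y) = ⊤) (hC : μ C ≠ ⊤) (hx0 : 0 < x)
    (hx : x ∈ erosion h C) : h < x := by
  by_contra! hxh
  refine hC (measure_mono_top (fun y hy => hx ⟨⟨?_, hy.2.le⟩, hy.1.le⟩) (hμ0 x hx0))
  linarith [hy.1]

lemma ofReal_le_volume_diff_erosion (hh : 0 ≤ h) (hpos : ∀ y ∈ erosion h C, 0 < y → h < y)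
    (hx0 : 0 < x) (hx : x ∈ erosion h C) :
    ENNReal.ofReal h ≤ volume (((C ∩ Ici 0) \ erosion h C) ∩ Ioc 0 x) := by
  set K := erosion h C ∩ Ioc 0 x
  have hK : IsGreatest K x := ⟨⟨hx, hx0, le_rfl⟩, fun y hy => hy.2.2⟩
  have hKfin : volume K ≠ ⊤ := measure_ne_top_of_subset inter_subset_right measure_Ioc_lt_top.ne
  have hsub : K - Icc 0 h ⊆ K ∪ ((C ∩ Ici 0) \ erosion h C) ∩ Ioc 0 x := by
    rintro _ ⟨y, ⟨hyE, hy0, hyx⟩, z, ⟨hz0, hzh⟩, rfl⟩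
    have hyz : y - z ∈ Ioc 0 x := ⟨by linarith [hpos y hyE hy0], by linarith⟩
    have hyzC : y - z ∈ C := hyE ⟨⟨by linarith, by linarith⟩, hyz.1.le⟩
    by_cases hE : y - z ∈ erosion h C
    · exact Or.inl ⟨hE, hyz⟩
    · exact Or.inr ⟨⟨⟨hyzC, hyz.1.le⟩, hE⟩, hyz⟩
  refine (ENNReal.add_le_add_iff_left hKfin).1 ?_
  calc volume K + ENNReal.ofReal h
      ≤ volume (K - Icc 0 h) := volume_add_ofReal_le_volume_sub_Icc hK hh
    _ ≤ volume (K ∪ ((C ∩ Ici 0) \ erosion h C) ∩ Ioc 0 x) := measure_mono hsub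
    _ ≤ _ := measure_union_le _ _

variable {c : ℝ≥0∞} {t : ℝ}

lemma mul_ofReal_le_measure_diff_erosion (hμ0 : ∀ y, 0 < y → μ (Ioo 0 y) = ⊤)
    (hμt : c • volume.restrict (Ioc 0 t) ≤ μ) (hC : μ C ≠ ⊤) (hh : 0 ≤ h)
    (hx : x ∈ erosion h C ∩ Ioc 0 t) :
    c * ENNReal.ofReal h ≤ μ ((C ∩ Ici 0) \ erosion h C) := by
  obtain ⟨hxE, hx0, hxt⟩ := hx
  set S := (C ∩ Ici 0) \ erosion h C
  calc c * ENNReal.ofReal h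
      ≤ c * volume (S ∩ Ioc 0 t) := by
        gcongr
        exact (ofReal_le_volume_diff_erosion hh
          (fun y hyE hy0 => lt_of_mem_erosion hμ0 hC hy0 hyE) hx0 hxE).trans (by gcongr)
    _ = (c • volume.restrict (Ioc 0 t)) S := by
        rw [Measure.smul_apply, Measure.restrict_apply' measurableSet_Ioc, smul_eq_mul]
    _ ≤ μ S := hμt S

lemma measure_sub_le_measure_diff_erosion (hμneg : μ (Iic 0) = 0)
    (hE : Disjoint (erosion h C) (Ioc 0 t)) :
    μ C - μ (Ioi t) ≤ μ ((C ∩ Ici 0) \ erosion h C) := by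
  have hsub : C ⊆ Iic 0 ∪ (Ioi t ∪ (C ∩ Ici 0) \ erosion h C) := by
    intro y hyC
    rcases le_or_gt y 0 with hy0 | hy0
    · exact Or.inl hy0
    rcases le_or_gt y t with hyt | hyt
    · exact Or.inr (Or.inr ⟨⟨hyC, hy0.le⟩, disjoint_right.1 hE ⟨hy0, hyt⟩⟩)
    · exact Or.inr (Or.inl hyt)
  refine tsub_le_iff_left.2 ?_
  calc μ C ≤ μ (Iic 0) + μ (Ioi t ∪ (C ∩ Ici 0) \ erosion h C) :=
        (measure_mono hsub).trans (measure_union_le _ _)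
    _ ≤ μ (Ioi t) + μ ((C ∩ Ici 0) \ erosion h C) := by
        rw [hμneg, zero_add]
        exact measure_union_le _ _

lemma min_le_measure_diff_erosion (hμneg : μ (Iic 0) = 0)
    (hμ0 : ∀ y, 0 < y → μ (Ioo 0 y) = ⊤) (hμt : c • volume.restrict (Ioc 0 t) ≤ μ)
    (hC : μ C ≠ ⊤) (hh : 0 ≤ h) :
    min (c * ENNReal.ofReal h) (μ C - μ (Ioi t)) ≤ μ ((C ∩ Ici 0) \ erosion h C) := by
  by_cases hE : Disjoint (erosion h C) (Ioc 0 t)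
  · exact min_le_of_right_le (measure_sub_le_measure_diff_erosion hμneg hE)
  · obtain ⟨x, hx⟩ := not_disjoint_iff_nonempty_inter.1 hE
    exact min_le_of_left_le (mul_ofReal_le_measure_diff_erosion hμ0 hμt hC hh hx)

lemma mul_ofReal_le_bdry1 {b : ℝ} (hμneg : μ (Iic 0) = 0)
    (hμ0 : ∀ y, 0 < y → μ (Ioo 0 y) = ⊤) (hμt : c • volume.restrict (Ioc 0 t) ≤ μ)
    (hc : c ≠ ⊤) (hb : 0 ≤ b) (hC : μ C ≠ ⊤) (hCt : μ (Ioi t) < μ C) :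
    c * ENNReal.ofReal b ≤ bdry1 μ (Icc 0 b) (Ici 0 \ C) := by
  have hsmall : ∀ᶠ ε : ℝ in 𝓝[>] 0, c * ENNReal.ofReal (ε * b) < μ C - μ (Ioi t) := by
    have hcont : Continuous fun ε : ℝ => c * ENNReal.ofReal (ε * b) :=
      (ENNReal.continuous_const_mul hc).comp
        (ENNReal.continuous_ofReal.comp (continuous_mul_const b))
    refine ((hcont.tendsto 0).mono_left nhdsWithin_le_nhds).eventually_lt_const ?_
    simpa using hCt
  refine le_liminf_of_le (by isBoundedDefault) ?_
  filter_upwards [hsmall, self_mem_nhdsWithin] with ε hεC (hε : 0 < ε)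
  rw [ENNReal.le_div_iff_mul_le (Or.inl (ENNReal.ofReal_pos.2 hε).ne')
    (Or.inl ENNReal.ofReal_ne_top), LinearOrderedField.smul_Icc hε, mul_zero,
    Ici_diff_add_Icc_diff]
  calc c * ENNReal.ofReal b * ENNReal.ofReal ε
      = c * ENNReal.ofReal (ε * b) := by
        rw [mul_assoc, ← ENNReal.ofReal_mul hb, mul_comm b]
    _ = min (c * ENNReal.ofReal (ε * b)) (μ C - μ (Ioi t)) := (min_eq_left hεC.le).symm
    _ ≤ _ := min_le_measure_diff_erosion hμneg hμ0 hμt hC (by positivity)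

end Layer

lemma exists_gt_lt_measure_Ioi {α : Type*} [MeasurableSpace α] [LinearOrder α]
    [TopologicalSpace α] [OrderTopology α] [FirstCountableTopology α] [DenselyOrdered α]
    [NoMaxOrder α] {μ : Measure α} {a : α} {v : ℝ≥0∞} (hv : v < μ (Ioi a)) :
    ∃ t, a < t ∧ v < μ (Ioi t) := by
  obtain ⟨u, hu_anti, hu_gt, hu_lim⟩ := exists_seq_strictAnti_tendsto a
  have hmono : Monotone fun n => Ioi (u n) := fun m n hmn => Ioi_subset_Ioi (hu_anti.antitone hmn)
  rw [← (isGLB_of_tendsto_atTop hu_anti.antitone hu_lim).iUnion_Ioi_eq, hmono.measure_iUnion,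
    lt_iSup_iff] at hv
  exact hv.imp' u fun n hn => ⟨hu_gt n, hn⟩

section Tail

variable {μ : Measure ℝ} {Φ : ℝ → ℝ}

lemma measure_Ioi_lt_measure_Ioi {c : ℝ≥0∞} {s t : ℝ}
    (hμt : c • volume.restrict (Ioc 0 t) ≤ μ) (hc : c ≠ 0) (hs : 0 ≤ s) (hst : s < t)
    (hfin : μ (Ioi t) ≠ ⊤) : μ (Ioi t) < μ (Ioi s) := by
  have hIoc : 0 < μ (Ioc s t) := by
    refine lt_of_lt_of_le ?_ (hμt (Ioc s t))
    rw [Measure.smul_apply, Measure.restrict_eq_self _ (Ioc_subset_Ioc_left hs), smul_eq_mul,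
      Real.volume_Ioc]
    exact ENNReal.mul_pos hc (ENNReal.ofReal_pos.2 (sub_pos.2 hst)).ne'
  rw [← Ioc_union_Ioi_eq_Ioi hst.le, measure_union Ioc_disjoint_Ioi_same measurableSet_Ioi,
    add_comm]
  exact ENNReal.lt_add_right hfin hIoc.ne'

lemma exists_lt_of_genInvE_lt {v t : ℝ} (ht : genInvE Φ v < ENNReal.ofReal t) :
    ∃ s, 0 < s ∧ s < t ∧ Φ s ≤ v := by
  simp only [genInvE, iInf_lt_iff] at ht
  obtain ⟨s, hs0, hsv, hst⟩ := ht
  exact ⟨s, hs0, (ENNReal.ofReal_lt_ofReal_iff_of_nonneg hs0.le).1 hst, hsv⟩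

variable {v : ℝ≥0∞}

lemma genInvE_pos (hμ0 : μ (Ioi 0) = ⊤) (hfin : ∀ t, 0 < t → μ (Ioi t) ≠ ⊤)
    (hΦ : ∀ t, 0 < t → Φ t = μ.real (Ioi t)) (hv : v ≠ ⊤) : 0 < genInvE Φ v.toReal := by
  obtain ⟨t, ht0, hvt⟩ := exists_gt_lt_measure_Ioi (hμ0 ▸ hv.lt_top)
  by_contra! hle
  obtain ⟨s, hs0, hst, hΦs⟩ := exists_lt_of_genInvE_lt (hle.trans_lt (ENNReal.ofReal_pos.2 ht0))
  rw [hΦ s hs0, measureReal_def, ENNReal.toReal_le_toReal (hfin s hs0) hv] at hΦs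
  exact (hvt.trans_le ((measure_mono (Ioi_subset_Ioi hst.le)).trans hΦs)).false

lemma measure_Ioi_lt_of_genInvE_lt {c : ℝ≥0∞} {t : ℝ}
    (hμt : c • volume.restrict (Ioc 0 t) ≤ μ) (hc : c ≠ 0)
    (hfin : ∀ t, 0 < t → μ (Ioi t) ≠ ⊤) (hΦ : ∀ t, 0 < t → Φ t = μ.real (Ioi t)) (hv : v ≠ ⊤)
    (ht : genInvE Φ v.toReal < ENNReal.ofReal t) : μ (Ioi t) < v := by
  obtain ⟨s, hs0, hst, hΦs⟩ := exists_lt_of_genInvE_lt ht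
  rw [hΦ s hs0, measureReal_def, ENNReal.toReal_le_toReal (hfin s hs0) hv] at hΦs
  exact (measure_Ioi_lt_measure_Ioi hμt hc hs0.le hst (hfin t (hs0.trans hst))).trans_le hΦs

end Tail

theorem ofReal_mul_phiE_genInvE_le_bdry1 {μ : Measure ℝ} {φ Φ : ℝ → ℝ} {b : ℝ} {C : Set ℝ}
    (hμneg : μ (Iic 0) = 0) (hμ0 : ∀ t, 0 < t → μ (Ioo 0 t) = ⊤)
    (hfin : ∀ t, 0 < t → μ (Ioi t) ≠ ⊤)
    (hφμ : ∀ t, 0 < t → ENNReal.ofReal (φ t) • volume.restrict (Ioc 0 t) ≤ μ)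
    (hφlsc : LowerSemicontinuousOn φ (Ioi 0)) (hΦ : ∀ t, 0 < t → Φ t = μ.real (Ioi t))
    (hb : 0 ≤ b) (hC : μ C ≠ ⊤) :
    ENNReal.ofReal (b * phiE φ (genInvE Φ (μ C).toReal)) ≤ bdry1 μ (Icc 0 b) (Ici 0 \ C) := by
  have hpos : 0 < genInvE Φ (μ C).toReal :=
    genInvE_pos (measure_mono_top Ioo_subset_Ioi_self (hμ0 1 one_pos)) hfin hΦ hC
  rw [phiE]
  split_ifs with htop
  · simp
  have ht : 0 < (genInvE Φ (μ C).toReal).toReal := ENNReal.toReal_pos hpos.ne' htop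
  have hlsc : LowerSemicontinuousAt φ (genInvE Φ (μ C).toReal).toReal := fun y hy => by
    simpa only [isOpen_Ioi.nhdsWithin_eq (mem_Ioi.2 ht)] using hφlsc _ ht y hy
  have hcont : Continuous fun y => ENNReal.ofReal (b * y) :=
    ENNReal.continuous_ofReal.comp (continuous_const_mul b)
  have hmono : Monotone fun y => ENNReal.ofReal (b * y) := fun _ _ hyz =>
    ENNReal.ofReal_le_ofReal (mul_le_mul_of_nonneg_left hyz hb)
  refine le_of_lowerSemicontinuousAt_of_forall_gt (f := fun s => ENNReal.ofReal (b * φ s))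
    (hcont.continuousAt.comp_lowerSemicontinuousAt hlsc hmono) fun s hs => ?_
  rcases eq_or_ne (ENNReal.ofReal (φ s)) 0 with hφs | hφs
  · simp [ENNReal.ofReal_mul hb, hφs]
  have hdom := hφμ s (ht.trans hs)
  have htail : μ (Ioi s) < μ C := measure_Ioi_lt_of_genInvE_lt hdom hφs hfin hΦ hC
    ((ENNReal.lt_ofReal_iff_toReal_lt htop).2 hs)
  calc ENNReal.ofReal (b * φ s)
      = ENNReal.ofReal (φ s) * ENNReal.ofReal b := by rw [ENNReal.ofReal_mul hb, mul_comm]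
    _ ≤ _ := mul_ofReal_le_bdry1 hμneg hμ0 hdom ENNReal.ofReal_ne_top hb hC htail

/-- The measure `f(t) dt` on the half-line `(0, ∞)`; the values of `f` on `(-∞, 0]` are
irrelevant. -/
noncomputable def halfLineMeasure (f : ℝ → ℝ≥0∞) : Measure ℝ :=
  (volume.restrict (Ioi 0)).withDensity f

section HalfLineMeasure

variable {f : ℝ → ℝ≥0∞} {a x : ℝ}

lemma withDensity_ite_pos :
    (volume.withDensity fun t => if 0 < t then f t else 0) = halfLineMeasure f := by
  rw [halfLineMeasure, ← withDensity_indicator measurableSet_Ioi]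
  congr

lemma halfLineMeasure_apply {s : Set ℝ} (hs : MeasurableSet s) (hs0 : s ⊆ Ioi 0) :
    halfLineMeasure f s = ∫⁻ t in s, f t := by
  rw [halfLineMeasure, withDensity_apply _ hs, Measure.restrict_restrict hs,
    inter_eq_self_of_subset_left hs0]

lemma halfLineMeasure_Iic_zero : halfLineMeasure f (Iic 0) = 0 := by
  refine withDensity_absolutelyContinuous _ _ ?_
  rw [Measure.restrict_apply measurableSet_Iic, Iic_inter_Ioi, Ioc_self, measure_empty]

lemma smul_restrict_Ioc_le_halfLineMeasure (hf : AntitoneOn f (Ioi 0)) (hx : 0 < x) :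
    f x • volume.restrict (Ioc 0 x) ≤ halfLineMeasure f := by
  calc f x • volume.restrict (Ioc 0 x)
      = (volume.restrict (Ioc 0 x)).withDensity fun _ => f x := (withDensity_const _).symm
    _ ≤ (volume.restrict (Ioc 0 x)).withDensity f :=
        withDensity_mono ((ae_restrict_mem measurableSet_Ioc).mono fun y hy => hf hy.1 hx hy.2)
    _ = (halfLineMeasure f).restrict (Ioc 0 x) := by
        rw [halfLineMeasure, restrict_withDensity measurableSet_Ioc,
          Measure.restrict_restrict_of_subset Ioc_subset_Ioi_self]
    _ ≤ halfLineMeasure f := Measure.restrict_le_self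

lemma halfLineMeasure_Icc_ne_top (hf : AntitoneOn f (Ioi 0)) (hx : 0 < x) (hfx : f x ≠ ⊤) :
    halfLineMeasure f (Icc x a) ≠ ⊤ := by
  rw [halfLineMeasure_apply measurableSet_Icc fun t ht => hx.trans_le ht.1]
  refine (setLIntegral_lt_top_of_le_nnreal measure_Icc_lt_top.ne ⟨(f x).toNNReal, ?_⟩).ne
  intro t ht
  rw [ENNReal.coe_toNNReal hfx]
  exact hf hx (hx.trans_le ht.1) ht.1

lemma halfLineMeasure_Ioi_ne_top (hf : AntitoneOn f (Ioi 0)) (hx : 0 < x) (hfx : f x ≠ ⊤)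
    (ha : halfLineMeasure f (Ioi a) ≠ ⊤) : halfLineMeasure f (Ioi x) ≠ ⊤ := by
  refine measure_ne_top_of_subset (fun y hy => ?_)
    (measure_union_ne_top (halfLineMeasure_Icc_ne_top (a := a) hf hx hfx) ha)
  exact (le_or_gt y a).imp (fun hya => ⟨le_of_lt hy, hya⟩) id

lemma halfLineMeasure_Ioo_eq_top (hf : AntitoneOn f (Ioi 0)) (hx : 0 < x) (hfx : f x ≠ ⊤)
    (ha : halfLineMeasure f (Ioo 0 a) = ⊤) : halfLineMeasure f (Ioo 0 x) = ⊤ := by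
  by_contra hne
  refine measure_ne_top_of_subset (fun y hy => ?_)
    (measure_union_ne_top hne (halfLineMeasure_Icc_ne_top (a := a) hf hx hfx)) ha
  exact (lt_or_ge y x).imp (fun hyx => ⟨hy.1, hyx⟩) fun hxy => ⟨hxy, hy.2.le⟩

lemma integral_Ioi_eq_halfLineMeasure_real {φ : ℝ → ℝ} (hφ0 : ∀ t, 0 < t → 0 ≤ φ t)
    (hφ : AntitoneOn φ (Ioi 0)) (hx : 0 ≤ x) :
    ∫ s in Ioi x, φ s = (halfLineMeasure fun t => ENNReal.ofReal (φ t)).real (Ioi x) := by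
  rw [measureReal_def, halfLineMeasure_apply measurableSet_Ioi (Ioi_subset_Ioi hx)]
  refine integral_eq_lintegral_of_nonneg_ae
    ((ae_restrict_mem measurableSet_Ioi).mono fun s hs => hφ0 s (hx.trans_lt hs)) ?_
  exact (aemeasurable_restrict_of_antitoneOn measurableSet_Ioi
    (hφ.mono (Ioi_subset_Ioi hx))).aestronglyMeasurable

end HalfLineMeasure

theorem stmt15_general {φ Φ : ℝ → ℝ} {b : ℝ} {C : Set ℝ} (hφ0 : ∀ t, 0 < t → 0 ≤ φ t)
    (hφ : AntitoneOn φ (Ioi 0)) (hφlsc : LowerSemicontinuousOn φ (Ioi 0))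
    (hint0 : ∫⁻ t in Ioo (0 : ℝ) 1, ENNReal.ofReal (φ t) = ⊤)
    (hintinf : ∫⁻ t in Ioi (1 : ℝ), ENNReal.ofReal (φ t) ≠ ⊤)
    (hΦ : ∀ t, 0 < t → Φ t = ∫ s in Ioi t, φ s) (hb : 0 ≤ b)
    (hC : halfLineMeasure (fun t => ENNReal.ofReal (φ t)) C ≠ ⊤) :
    ENNReal.ofReal
        (b * phiE φ (genInvE Φ (halfLineMeasure (fun t => ENNReal.ofReal (φ t)) C).toReal)) ≤
      bdry1 (halfLineMeasure fun t => ENNReal.ofReal (φ t)) (Icc 0 b) (Ici 0 \ C) := by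
  have hf : AntitoneOn (fun t => ENNReal.ofReal (φ t)) (Ioi 0) := fun s hs t ht hst =>
    ENNReal.ofReal_le_ofReal (hφ hs ht hst)
  rw [← halfLineMeasure_apply measurableSet_Ioo Ioo_subset_Ioi_self] at hint0
  rw [← halfLineMeasure_apply measurableSet_Ioi (Ioi_subset_Ioi zero_le_one)] at hintinf
  exact ofReal_mul_phiE_genInvE_le_bdry1 halfLineMeasure_Iic_zero
    (fun t ht => halfLineMeasure_Ioo_eq_top hf ht ENNReal.ofReal_ne_top hint0)
    (fun t ht => halfLineMeasure_Ioi_ne_top hf ht ENNReal.ofReal_ne_top hintinf)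
    (fun t ht => smul_restrict_Ioc_le_halfLineMeasure hf ht) hφlsc
    (fun t ht => (hΦ t ht).trans (integral_Ioi_eq_halfLineMeasure_real hφ0 hφ ht.le)) hb hC

/-- one-dimensional isoperimetric inequality: for `μ = φ(t)dt` on `ℝ₊` with
`φ` non-increasing, lower semi-continuous, non-integrable at `0` and integrable at `∞`,
and `B = [0,b]`, we have `μ⁻_B(C) ≥ b ⬝ φ(Φ⁻¹(μ(C)))` for every Borel `C ⊆ ℝ₊` of finite
measure. -/
theorem stmt15 (φ : ℝ → ℝ) (hφm : Measurable φ) (hφ0 : ∀ t : ℝ, 0 < t → 0 ≤ φ t)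
    (hφmono : ∀ s t : ℝ, 0 < s → s ≤ t → φ t ≤ φ s)
    (hφlsc : LowerSemicontinuousOn φ (Set.Ioi 0))
    (hint0 : ∫⁻ t in Set.Ioo (0 : ℝ) 1, ENNReal.ofReal (φ t) = ⊤)
    (hintinf : ∫⁻ t in Set.Ioi (1 : ℝ), ENNReal.ofReal (φ t) < ⊤)
    (μ : Measure ℝ)
    (hμ : μ = volume.withDensity fun t => if 0 < t then ENNReal.ofReal (φ t) else 0)
    (Φ : ℝ → ℝ) (hΦ : ∀ t : ℝ, 0 < t → Φ t = ∫ s in Set.Ioi t, φ s)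
    (b : ℝ) (hb : 0 < b) :
    ∀ C : Set ℝ, MeasurableSet C → C ⊆ Set.Ici 0 → μ C < ⊤ →
      ENNReal.ofReal (b * phiE φ (genInvE Φ (μ C).toReal)) ≤
        bdry1 μ (Set.Icc 0 b) (Set.Ici 0 \ C) := by
  subst hμ
  rw [withDensity_ite_pos]
  exact fun C _ _ hC => stmt15_general hφ0 (fun s hs t _ hst => hφmono s t hs hst) hφlsc hint0
    hintinf.ne hΦ hb.le hC.ne
end

section
/- Let n ≥ 1, p ∈ (−1/n, 0), and let q satisfy 1/q = 1/p + n (so q < 0). Let w : ℝⁿ∖{0} → [0,∞) be a locally-integrable p-homogeneous Borel density and let μ be the measure with density w with respect to Lebesgue measure. Let ‖·‖ be a norm on ℝⁿ, and set α := 1/(1−q), C₁ := −(1/q)·μ({x : ‖x‖ ≥ 1})^q, and C₂ := C₁^{−α}. Then for every essentially bounded locally Lipschitz function f : ℝⁿ → ℝ with f(0) = 0, ‖f‖_{L¹(μ)} ≤ C₂·(∫ ‖∇f‖*(x) dμ(x))^α·‖f‖_{L^∞(μ)}^{1−α}, where ‖∇f‖*(x) := limsup_{y→x} |f(y)−f(x)|/‖y−x‖.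 -/
open MeasureTheory Set Filter
open scoped Pointwise ENNReal Topology

/-!
Integrating `f` along the rays from the origin and using the homogeneity of `μ`, of degree `1 / q`,
gives the Hardy inequality `∫ |f| / ‖x‖ dμ ≤ (1 - 1 / q)⁻¹ ∫ ‖∇f‖* dμ`. In the pointwise bound
`|f| ≤ R |f| / ‖x‖ + ‖f‖_∞ (1 - R / ‖x‖)₊` the first term is controlled by Hardy, and the last one
has an explicit integral by the same ray integration, applied to the indicator of `{‖x‖ ≥ R}`.
The result is an inequality that is linear in the gradient term and in `‖f‖_∞` and has a free
scale `R`; the best `R` turns it into the multiplicative one, with the constant `C₂`.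
-/

section

variable {E : Type*} [NormedAddCommGroup E] [NormedSpace ℝ E] {N f : E → ℝ}

/-- A norm without symmetry and without the triangle inequality: a continuous, positively
homogeneous function, positive away from the origin. It plays the role of the norm whose dual
measures gradients. -/
structure IsHomogeneousGauge (N : E → ℝ) : Prop where
  continuous : Continuous N
  pos : ∀ x, x ≠ 0 → 0 < N x
  map_smul : ∀ c : ℝ, 0 ≤ c → ∀ x, N (c • x) = c * N x

/-- The dual norm `‖∇f‖*` of the gradient of `f` at `x`, with respect to the gauge `N`, for a
function that need not be differentiable. It is a real `limsup`, hence meaningful only where the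
difference quotients are bounded near `x`. -/
noncomputable def metricSlope (N : E → ℝ) (f : E → ℝ) (x : E) : ℝ :=
  limsup (fun y => |f y - f x| / N (y - x)) (𝓝[≠] x)

namespace IsHomogeneousGauge

theorem of_subadditive [FiniteDimensional ℝ E] (hpos : ∀ x, x ≠ 0 → 0 < N x)
    (hadd : ∀ x y, N (x + y) ≤ N x + N y)
    (hsmul : ∀ c : ℝ, 0 ≤ c → ∀ x, N (c • x) = c * N x) : IsHomogeneousGauge N where
  continuous := by
    refine (ConvexOn.locallyLipschitz ⟨convex_univ, ?_⟩).continuous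
    intro x _ y _ a b ha hb _
    simpa only [hsmul a ha, hsmul b hb, smul_eq_mul] using hadd (a • x) (b • y)
  pos := hpos
  map_smul := hsmul

theorem map_zero (hN : IsHomogeneousGauge N) : N 0 = 0 := by
  simpa using hN.map_smul 0 le_rfl 0

theorem nonneg (hN : IsHomogeneousGauge N) (x : E) : 0 ≤ N x := by
  rcases eq_or_ne x 0 with rfl | hx
  · exact hN.map_zero.ge
  · exact (hN.pos x hx).le

theorem iUnion_one_div_le (hN : IsHomogeneousGauge N) :
    ⋃ k : ℕ, {x | 1 / ((k : ℝ) + 1) ≤ N x} = {0}ᶜ := by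
  ext x
  simp only [mem_iUnion, mem_ofPred_eq, mem_compl_iff, mem_singleton_iff]
  constructor
  · rintro ⟨k, hk⟩ rfl
    exact (Nat.one_div_pos_of_nat.trans_le hk).ne' hN.map_zero
  · intro hx
    obtain ⟨k, hk⟩ := exists_nat_one_div_lt (hN.pos x hx)
    exact ⟨k, hk.le⟩

theorem exists_mul_norm_le [FiniteDimensional ℝ E] (hN : IsHomogeneousGauge N) :
    ∃ k > 0, ∀ x, k * ‖x‖ ≤ N x := by
  rcases subsingleton_or_nontrivial E with hE | hE
  · exact ⟨1, one_pos, fun x => by simp [Subsingleton.elim x 0, hN.map_zero]⟩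
  have := FiniteDimensional.proper ℝ E
  obtain ⟨z, hz, hmin⟩ := (isCompact_sphere (0 : E) 1).exists_isMinOn
    (NormedSpace.sphere_nonempty.2 zero_le_one) hN.continuous.continuousOn
  refine ⟨N z, hN.pos z (ne_zero_of_mem_unit_sphere ⟨z, hz⟩), fun x => ?_⟩
  rcases eq_or_ne x 0 with rfl | hx
  · simp [hN.map_zero]
  have hx' : 0 < ‖x‖ := norm_pos_iff.2 hx
  have hzx : N z ≤ N (‖x‖⁻¹ • x) := hmin (by simp [norm_smul, hx'.ne'])
  rwa [hN.map_smul _ (by positivity), inv_mul_eq_div, le_div_iff₀ hx'] at hzx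

theorem isCompact_preimage_Icc [FiniteDimensional ℝ E] (hN : IsHomogeneousGauge N) (a b : ℝ) :
    IsCompact (N ⁻¹' Icc a b) := by
  have := FiniteDimensional.proper ℝ E
  obtain ⟨k, hk, hkN⟩ := hN.exists_mul_norm_le
  refine (isCompact_closedBall (0 : E) (b / k)).of_isClosed_subset
    (isClosed_Icc.preimage hN.continuous) fun x hx => ?_
  rw [mem_closedBall_zero_iff, le_div_iff₀' hk]
  exact (hkN x).trans hx.2

theorem isBoundedUnder_slope [FiniteDimensional ℝ E] (hN : IsHomogeneousGauge N)
    (hf : LocallyLipschitz f) (x : E) :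
    IsBoundedUnder (· ≤ ·) (𝓝[≠] x) fun y => |f y - f x| / N (y - x) := by
  obtain ⟨k, hk, hkN⟩ := hN.exists_mul_norm_le
  obtain ⟨K, t, ht, hK⟩ := hf x
  refine isBoundedUnder_of_eventually_le (a := K / k) ?_
  filter_upwards [mem_nhdsWithin_of_mem_nhds ht, self_mem_nhdsWithin] with y hy hyx
  rw [div_le_div_iff₀ (hN.pos _ (sub_ne_zero.2 hyx)) hk]
  have hKy : |f y - f x| ≤ K * ‖y - x‖ := by
    simpa only [dist_eq_norm, Real.norm_eq_abs] using hK.dist_le_mul y hy x (mem_of_mem_nhds ht)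
  calc |f y - f x| * k ≤ K * ‖y - x‖ * k := by gcongr
    _ = K * (k * ‖y - x‖) := by ring
    _ ≤ K * N (y - x) := by gcongr; exact hkN _

theorem metricSlope_nonneg [FiniteDimensional ℝ E] [Nontrivial E] (hN : IsHomogeneousGauge N)
    (hf : LocallyLipschitz f) (x : E) : 0 ≤ metricSlope N f x :=
  le_limsup_of_frequently_le
    (Eventually.of_forall fun _ => div_nonneg (abs_nonneg _) (hN.nonneg _)).frequently
    (hN.isBoundedUnder_slope hf x)

theorem tendsto_slope_lineDeriv (hN : IsHomogeneousGauge N) {x v : E}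
    (hd : LineDifferentiableAt ℝ f x v) :
    Tendsto (fun t : ℝ => |f (x + t • v) - f x| / N (x + t • v - x)) (𝓝[>] 0)
      (𝓝 (|lineDeriv ℝ f x v| / N v)) := by
  have hlim := hd.hasLineDerivAt.tendsto_slope_zero_right.abs.div_const (N v)
  refine hlim.congr' ?_
  filter_upwards [self_mem_nhdsWithin] with t (ht : 0 < t)
  rw [add_sub_cancel_left, hN.map_smul t ht.le, smul_eq_mul, abs_mul, abs_inv, abs_of_pos ht,
    inv_mul_eq_div, div_div]

theorem abs_lineDeriv_le [FiniteDimensional ℝ E] (hN : IsHomogeneousGauge N)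
    (hf : LocallyLipschitz f) (x v : E) :
    |lineDeriv ℝ f x v| ≤ metricSlope N f x * N v := by
  rcases eq_or_ne v 0 with rfl | hv
  · simp [lineDeriv_zero, hN.map_zero]
  have : Nontrivial E := ⟨v, 0, hv⟩
  by_cases hd : LineDifferentiableAt ℝ f x v
  swap
  · rw [lineDeriv_zero_of_not_lineDifferentiableAt hd, abs_zero]
    exact mul_nonneg (hN.metricSlope_nonneg hf x) (hN.nonneg v)
  rw [← div_le_iff₀ (hN.pos v hv)]
  have hray : Tendsto (fun t : ℝ => x + t • v) (𝓝[>] 0) (𝓝[≠] x) := by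
    refine tendsto_nhdsWithin_iff.2 ⟨?_, ?_⟩
    · have hcont : Continuous fun t : ℝ => x + t • v := by fun_prop
      simpa using (hcont.tendsto 0).mono_left nhdsWithin_le_nhds
    · filter_upwards [self_mem_nhdsWithin] with t (ht : 0 < t)
      simp [ht.ne', hv]
  have hlim := hN.tendsto_slope_lineDeriv hd
  calc |lineDeriv ℝ f x v| / N v
      = limsup ((fun y => |f y - f x| / N (y - x)) ∘ fun t : ℝ => x + t • v) (𝓝[>] 0) :=
        hlim.limsup_eq.symm
    _ ≤ metricSlope N f x :=
        hray.limsup_comp_le_limsup hlim.isBoundedUnder_ge.isCoboundedUnder_le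
          (hN.isBoundedUnder_slope hf x)

end IsHomogeneousGauge

theorem enorm_add_sub_le_lintegral_enorm_lineDeriv (hf : LocallyLipschitz f) (x v : E) :
    ‖f (x + v) - f x‖ₑ ≤ ∫⁻ τ in Ioc (0 : ℝ) 1, ‖lineDeriv ℝ f (x + τ • v) v‖ₑ := by
  set g : ℝ → ℝ := fun τ => f (x + τ • v)
  have hray : LocallyLipschitz fun τ : ℝ => x + τ • v :=
    (LocallyLipschitz.const x).add
      (ContinuousLinearMap.toSpanSingleton ℝ v).lipschitz.locallyLipschitz
  obtain ⟨K, hK⟩ := (hf.comp hray).locallyLipschitzOn.exists_lipschitzOnWith_of_compact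
    (isCompact_uIcc (a := (0 : ℝ)) (b := 1))
  have hFTC : ∫ τ in Ioc (0 : ℝ) 1, deriv g τ = f (x + v) - f x := by
    rw [← intervalIntegral.integral_of_le zero_le_one]
    simpa [g, Function.comp_def] using hK.absolutelyContinuousOnInterval.integral_deriv_eq_sub
  have hderiv (τ : ℝ) : deriv g τ = lineDeriv ℝ f (x + τ • v) v := by
    rw [← add_zero τ, ← deriv_comp_const_add, add_zero]
    simp only [g, lineDeriv, add_smul, add_assoc]
  simp only [← hFTC, ← hderiv]
  exact enorm_integral_le_lintegral_enorm _

theorem enorm_div_gauge_le_lintegral_ray (hN : IsHomogeneousGauge N)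
    (hf : LocallyLipschitz f) (hf0 : f 0 = 0) {x : E} (hx : x ≠ 0) :
    ‖f x‖ₑ / ENNReal.ofReal (N x) ≤
      ∫⁻ τ in Ioc (0 : ℝ) 1, ENNReal.ofReal (|lineDeriv ℝ f (τ • x) (τ • x)| / N (τ • x)) := by
  have hNx := hN.pos x hx
  have hray := enorm_add_sub_le_lintegral_enorm_lineDeriv hf 0 x
  simp only [zero_add, hf0, sub_zero] at hray
  refine ENNReal.div_le_of_le_mul (hray.trans_eq ?_)
  rw [← lintegral_mul_const' _ _ ENNReal.ofReal_ne_top]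
  refine setLIntegral_congr_fun measurableSet_Ioc fun τ hτ => ?_
  have hτ0 : 0 < τ := hτ.1
  simp only [lineDeriv_smul, hN.map_smul τ hτ0.le, smul_eq_mul, abs_mul, abs_of_pos hτ0]
  rw [mul_div_mul_left _ _ hτ0.ne', ← ENNReal.ofReal_mul (by positivity),
    div_mul_cancel₀ _ hNx.ne', Real.enorm_eq_ofReal_abs]

theorem homogeneous_of_rpow_homogeneous {w : E → ℝ} {p : ℝ} (hp : p ≠ 0) (hw0 : ∀ x, 0 ≤ w x)
    (hwhom : ∀ c : ℝ, 0 < c → ∀ x, x ≠ 0 → w (c • x) ^ p = c * w x ^ p)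
    (c : ℝ) (hc : 0 < c) (x : E) (hx : x ≠ 0) : w (c • x) = c ^ (1 / p) * w x := by
  have hroot : w (c • x) = (c * w x ^ p) ^ p⁻¹ :=
    (Real.eq_rpow_inv (hw0 _) (mul_nonneg hc.le (Real.rpow_nonneg (hw0 x) p)) hp).2
      (hwhom c hc x hx)
  rw [hroot, Real.mul_rpow hc.le (Real.rpow_nonneg (hw0 x) p), Real.rpow_rpow_inv (hw0 x) hp,
    one_div]

variable [MeasurableSpace E] {μ : Measure E} {d : ℝ}

/-- A measure of homogeneity degree `d`, that is, `μ (c • A) = c ^ d * μ A` for `c > 0`, without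
atom at the origin and finite on compact sets avoiding it. Lebesgue measure has degree the
dimension; a density homogeneous of degree `k` adds `k` to it. -/
structure IsHomogeneousMeasure_s19 (μ : Measure E) (d : ℝ) : Prop where
  map_smul : ∀ c : ℝ, 0 < c → μ.map (c • ·) = ENNReal.ofReal (c ^ (-d)) • μ
  measure_zero : μ {0} = 0
  measure_lt_top : ∀ K : Set E, IsCompact K → 0 ∉ K → μ K < ⊤

namespace IsHomogeneousMeasure_s19

theorem ae_ne_zero (hμ : IsHomogeneousMeasure_s19 μ d) : ∀ᵐ x ∂μ, x ≠ 0 := by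
  simpa [ae_iff] using hμ.measure_zero

theorem sigmaFinite [FiniteDimensional ℝ E] (hμ : IsHomogeneousMeasure_s19 μ d) : SigmaFinite μ := by
  have := FiniteDimensional.proper ℝ E
  set K : ℕ → Set E := fun k => Metric.closedBall 0 k \ Metric.ball 0 (1 / ((k : ℝ) + 1))
  have hK (k : ℕ) : μ (K k) < ⊤ := by
    refine hμ.measure_lt_top _ ((isCompact_closedBall 0 _).diff Metric.isOpen_ball) fun h0 => ?_
    exact h0.2 (Metric.mem_ball_self Nat.one_div_pos_of_nat)
  refine Measure.sigmaFinite_of_countable (S := insert {0} (range K))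
    ((countable_range K).insert _) ?_ (eq_univ_of_forall fun x => ?_)
  · rintro _ (rfl | ⟨k, rfl⟩)
    · exact hμ.measure_zero.trans_lt ENNReal.zero_lt_top
    · exact hK k
  rcases eq_or_ne x 0 with rfl | hx
  · exact mem_sUnion.2 ⟨{0}, mem_insert _ _, rfl⟩
  obtain ⟨k, hk⟩ := exists_nat_ge (max ‖x‖ (1 / ‖x‖))
  have hlarge : ‖x‖ ≤ k := (le_max_left _ _).trans hk
  have hsmall : 1 / ((k : ℝ) + 1) ≤ ‖x‖ := by
    rw [one_div_le (by positivity) (norm_pos_iff.2 hx)]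
    exact ((le_max_right _ _).trans hk).trans (by linarith)
  refine mem_sUnion.2 ⟨K k, mem_insert_of_mem _ (mem_range_self k), ?_⟩
  simpa only [K, Set.mem_sdiff, mem_closedBall_zero_iff, mem_ball_zero_iff, not_lt] using
    ⟨hlarge, hsmall⟩

variable [BorelSpace E]

theorem lintegral_comp_smul (hμ : IsHomogeneousMeasure_s19 μ d) {c : ℝ} (hc : 0 < c)
    {h : E → ℝ≥0∞} (hh : Measurable h) :
    ∫⁻ x, h (c • x) ∂μ = ENNReal.ofReal (c ^ (-d)) * ∫⁻ x, h x ∂μ := by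
  rw [← lintegral_map hh (measurable_const_smul c), hμ.map_smul c hc, lintegral_smul_measure,
    smul_eq_mul]

theorem measure_preimage_smul (hμ : IsHomogeneousMeasure_s19 μ d) {c : ℝ} (hc : 0 < c) {A : Set E}
    (hA : MeasurableSet A) : μ ((c • ·) ⁻¹' A) = ENNReal.ofReal (c ^ (-d)) * μ A := by
  rw [← Measure.map_apply (measurable_const_smul c) hA, hμ.map_smul c hc, Measure.smul_apply,
    smul_eq_mul]

theorem measure_le_gauge (hμ : IsHomogeneousMeasure_s19 μ d) (hN : IsHomogeneousGauge N) {r : ℝ}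
    (hr : 0 < r) : μ {x | r ≤ N x} = ENNReal.ofReal (r ^ d) * μ {x | 1 ≤ N x} := by
  have hset : {x | r ≤ N x} = (r⁻¹ • ·) ⁻¹' {x | 1 ≤ N x} := by
    ext x
    simp only [mem_ofPred_eq, mem_preimage, hN.map_smul _ (inv_pos.2 hr).le, inv_mul_eq_div,
      le_div_iff₀ hr, one_mul]
  rw [hset, hμ.measure_preimage_smul (inv_pos.2 hr)
    (measurableSet_le measurable_const hN.continuous.measurable), Real.inv_rpow hr.le,
    Real.rpow_neg hr.le, inv_inv]

theorem eq_zero_of_measure_one_le_gauge (hμ : IsHomogeneousMeasure_s19 μ d)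
    (hN : IsHomogeneousGauge N) (h0 : μ {x | 1 ≤ N x} = 0) : μ = 0 := by
  have hcompl : μ {0}ᶜ = 0 := by
    rw [← hN.iUnion_one_div_le, measure_iUnion_null_iff]
    intro k
    rw [hμ.measure_le_gauge hN Nat.one_div_pos_of_nat, h0, mul_zero]
  rw [← Measure.measure_univ_eq_zero, ← union_compl_self {(0 : E)}]
  exact measure_union_null hμ.measure_zero hcompl

theorem measure_one_le_gauge_lt_top [FiniteDimensional ℝ E] (hμ : IsHomogeneousMeasure_s19 μ d)
    (hd : d < 0) (hN : IsHomogeneousGauge N) : μ {x | 1 ≤ N x} < ⊤ := by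
  set A : Set E := N ⁻¹' Icc 1 2
  have hA : MeasurableSet A := hN.continuous.measurable measurableSet_Icc
  have hA_lt : μ A < ⊤ := by
    refine hμ.measure_lt_top A (hN.isCompact_preimage_Icc 1 2) fun h0 => ?_
    have h1 : (1 : ℝ) ≤ 0 := hN.map_zero ▸ h0.1
    exact h1.not_gt one_pos
  have hcover : {x | 1 ≤ N x} ⊆ ⋃ k : ℕ, (((2 : ℝ)⁻¹ ^ k) • ·) ⁻¹' A := by
    intro x (hx : 1 ≤ N x)
    obtain ⟨k, hk1, hk2⟩ := exists_nat_pow_near hx one_lt_two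
    have h2k : (0 : ℝ) < 2 ^ k := by positivity
    refine mem_iUnion.2 ⟨k, ?_⟩
    simp only [A, mem_preimage, inv_pow, hN.map_smul _ (inv_pos.2 h2k).le, inv_mul_eq_div,
      mem_Icc, one_le_div₀ h2k, div_le_iff₀ h2k]
    exact ⟨hk1, hk2.le.trans_eq (pow_succ' 2 k)⟩
  have hannulus (k : ℕ) :
      μ ((((2 : ℝ)⁻¹ ^ k) • ·) ⁻¹' A) = ENNReal.ofReal ((2 : ℝ)⁻¹ ^ (-d)) ^ k * μ A := by
    rw [hμ.measure_preimage_smul (by positivity) hA, ← ENNReal.ofReal_pow (by positivity),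
      Real.rpow_pow_comm (by positivity)]
  have hratio : ENNReal.ofReal ((2 : ℝ)⁻¹ ^ (-d)) < 1 :=
    ENNReal.ofReal_lt_one.2 (Real.rpow_lt_one (by norm_num) (by norm_num) (neg_pos.2 hd))
  calc μ {x | 1 ≤ N x} ≤ ∑' k : ℕ, μ ((((2 : ℝ)⁻¹ ^ k) • ·) ⁻¹' A) :=
        (measure_mono hcover).trans (measure_iUnion_le _)
    _ = (1 - ENNReal.ofReal ((2 : ℝ)⁻¹ ^ (-d)))⁻¹ * μ A := by
        simp only [hannulus]
        rw [ENNReal.tsum_mul_right, ENNReal.tsum_geometric]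
    _ < ⊤ := ENNReal.mul_lt_top (ENNReal.inv_lt_top.2 (tsub_pos_of_lt hratio)) hA_lt

theorem lintegral_lintegral_smul [FiniteDimensional ℝ E] (hμ : IsHomogeneousMeasure_s19 μ d)
    (hd : d < 1) {h : E → ℝ≥0∞} (hh : Measurable h) :
    ∫⁻ x, (∫⁻ τ in Ioc (0 : ℝ) 1, h (τ • x)) ∂μ =
      ENNReal.ofReal (1 / (1 - d)) * ∫⁻ x, h x ∂μ := by
  have := FiniteDimensional.proper ℝ E
  have := hμ.sigmaFinite
  have hint : IntegrableOn (fun τ : ℝ => τ ^ (-d)) (Ioc 0 1) :=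
    (intervalIntegrable_iff_integrableOn_Ioc_of_le zero_le_one).1
      (intervalIntegral.intervalIntegrable_rpow' (by linarith))
  have hpow : ∫⁻ τ in Ioc (0 : ℝ) 1, ENNReal.ofReal (τ ^ (-d)) = ENNReal.ofReal (1 / (1 - d)) := by
    rw [← ofReal_integral_eq_lintegral_ofReal hint
      (ae_restrict_of_forall_mem measurableSet_Ioc fun τ hτ => Real.rpow_nonneg hτ.1.le _),
      ← intervalIntegral.integral_of_le zero_le_one, integral_rpow (Or.inl (by linarith)),
      Real.one_rpow, Real.zero_rpow (by linarith), sub_zero, neg_add_eq_sub]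
  calc ∫⁻ x, (∫⁻ τ in Ioc (0 : ℝ) 1, h (τ • x)) ∂μ
      = ∫⁻ τ in Ioc (0 : ℝ) 1, (∫⁻ x, h (τ • x) ∂μ) := lintegral_lintegral_swap (by fun_prop)
    _ = ∫⁻ τ in Ioc (0 : ℝ) 1, ENNReal.ofReal (τ ^ (-d)) * ∫⁻ x, h x ∂μ :=
        setLIntegral_congr_fun measurableSet_Ioc fun τ hτ => hμ.lintegral_comp_smul hτ.1 hh
    _ = ENNReal.ofReal (1 / (1 - d)) * ∫⁻ x, h x ∂μ := by
        rw [lintegral_mul_const _ (by fun_prop), hpow]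

theorem lintegral_enorm_div_gauge_le [FiniteDimensional ℝ E] (hμ : IsHomogeneousMeasure_s19 μ d)
    (hd : d < 1) (hN : IsHomogeneousGauge N) (hf : LocallyLipschitz f) (hf0 : f 0 = 0) :
    ∫⁻ x, ‖f x‖ₑ / ENNReal.ofReal (N x) ∂μ ≤
      ENNReal.ofReal (1 / (1 - d)) * ∫⁻ x, ENNReal.ofReal (metricSlope N f x) ∂μ := by
  have := FiniteDimensional.proper ℝ E
  set h : E → ℝ≥0∞ := fun x => ENNReal.ofReal (|lineDeriv ℝ f x x| / N x)
  have hh : Measurable h := by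
    have hderiv : Measurable fun x => lineDeriv ℝ f x x :=
      (measurable_lineDeriv_uncurry hf.continuous).comp (measurable_id.prodMk measurable_id)
    exact (hderiv.abs.div hN.continuous.measurable).ennreal_ofReal
  calc ∫⁻ x, ‖f x‖ₑ / ENNReal.ofReal (N x) ∂μ
      ≤ ∫⁻ x, (∫⁻ τ in Ioc (0 : ℝ) 1, h (τ • x)) ∂μ :=
        lintegral_mono_ae (hμ.ae_ne_zero.mono fun x => enorm_div_gauge_le_lintegral_ray hN hf hf0)
    _ = ENNReal.ofReal (1 / (1 - d)) * ∫⁻ x, h x ∂μ := hμ.lintegral_lintegral_smul hd hh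
    _ ≤ ENNReal.ofReal (1 / (1 - d)) * ∫⁻ x, ENNReal.ofReal (metricSlope N f x) ∂μ := by
        gcongr _ * ?_
        refine lintegral_mono_ae (hμ.ae_ne_zero.mono fun x hx => ?_)
        exact ENNReal.ofReal_le_ofReal
          ((div_le_iff₀ (hN.pos x hx)).2 (hN.abs_lineDeriv_le hf x x))

theorem ae_eq_zero_of_lintegral_metricSlope_eq_zero [FiniteDimensional ℝ E]
    (hμ : IsHomogeneousMeasure_s19 μ d) (hd : d < 1) (hN : IsHomogeneousGauge N)
    (hf : LocallyLipschitz f) (hf0 : f 0 = 0)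
    (hslope : ∫⁻ x, ENNReal.ofReal (metricSlope N f x) ∂μ = 0) : f =ᵐ[μ] 0 := by
  have hHardy := hμ.lintegral_enorm_div_gauge_le hd hN hf hf0
  have hmeas : Measurable fun x => ‖f x‖ₑ / ENNReal.ofReal (N x) :=
    hf.continuous.measurable.enorm.div hN.continuous.measurable.ennreal_ofReal
  rw [hslope, mul_zero, nonpos_iff_eq_zero, lintegral_eq_zero_iff hmeas] at hHardy
  filter_upwards [hHardy] with x hx
  simpa using hx

theorem lintegral_one_sub_div_gauge [FiniteDimensional ℝ E] (hμ : IsHomogeneousMeasure_s19 μ d)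
    (hd : d < 1) (hN : IsHomogeneousGauge N) {R : ℝ} (hR : 0 < R) :
    ∫⁻ x, ENNReal.ofReal (1 - R / N x) ∂μ =
      ENNReal.ofReal (1 / (1 - d)) * (ENNReal.ofReal (R ^ d) * μ {x | 1 ≤ N x}) := by
  have hA : MeasurableSet {x | R ≤ N x} :=
    measurableSet_le measurable_const hN.continuous.measurable
  rw [← hμ.measure_le_gauge hN hR, ← lintegral_indicator_one hA,
    ← hμ.lintegral_lintegral_smul hd (measurable_one.indicator hA)]
  refine lintegral_congr_ae ?_
  filter_upwards [hμ.ae_ne_zero] with x hx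
  have hNx := hN.pos x hx
  have hray (τ : ℝ) (hτ : τ ∈ Ioc (0 : ℝ) 1) : {x | R ≤ N x}.indicator (1 : E → ℝ≥0∞) (τ • x) =
      (Ici (R / N x)).indicator 1 τ := by
    simp only [indicator_apply, mem_ofPred_eq, mem_Ici, hN.map_smul τ hτ.1.le, div_le_iff₀ hNx,
      Pi.one_apply]
  have hIcc : Ici (R / N x) ∩ Ioc 0 1 = Icc (R / N x) 1 := by
    ext τ
    have hRN : 0 < R / N x := by positivity
    exact ⟨fun h => ⟨h.1, h.2.2⟩, fun h => ⟨h.1, hRN.trans_le h.1, h.2⟩⟩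
  rw [setLIntegral_congr_fun measurableSet_Ioc hray, lintegral_indicator_one measurableSet_Ici,
    Measure.restrict_apply measurableSet_Ici, hIcc, Real.volume_Icc]

theorem lintegral_enorm_le_add [FiniteDimensional ℝ E] (hμ : IsHomogeneousMeasure_s19 μ d)
    (hd : d < 1) (hN : IsHomogeneousGauge N) (hf : LocallyLipschitz f) (hf0 : f 0 = 0) {R : ℝ}
    (hR : 0 < R) :
    ∫⁻ x, ‖f x‖ₑ ∂μ ≤ ENNReal.ofReal (1 / (1 - d)) *
      (ENNReal.ofReal R * ∫⁻ x, ENNReal.ofReal (metricSlope N f x) ∂μ +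
        eLpNorm f ⊤ μ * (ENNReal.ofReal (R ^ d) * μ {x | 1 ≤ N x})) := by
  have hsplit : ∀ᵐ x ∂μ, ‖f x‖ₑ ≤ ENNReal.ofReal R * (‖f x‖ₑ / ENNReal.ofReal (N x)) +
      eLpNorm f ⊤ μ * ENNReal.ofReal (1 - R / N x) := by
    filter_upwards [hμ.ae_ne_zero, enorm_ae_le_eLpNormEssSup f μ] with x hx hfx
    calc ‖f x‖ₑ = ‖f x‖ₑ * ENNReal.ofReal (R / N x + (1 - R / N x)) := by simp
      _ ≤ ‖f x‖ₑ * (ENNReal.ofReal (R / N x) + ENNReal.ofReal (1 - R / N x)) := by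
          gcongr
          exact ENNReal.ofReal_add_le
      _ = ENNReal.ofReal R * (‖f x‖ₑ / ENNReal.ofReal (N x)) +
            ‖f x‖ₑ * ENNReal.ofReal (1 - R / N x) := by
          rw [ENNReal.ofReal_div_of_pos (hN.pos x hx), mul_add,
            ← mul_div_assoc, mul_comm ‖f x‖ₑ, mul_div_assoc]
      _ ≤ _ := by
          rw [eLpNorm_exponent_top]
          gcongr
  have hmeas : Measurable fun x => ‖f x‖ₑ / ENNReal.ofReal (N x) :=
    hf.continuous.measurable.enorm.div hN.continuous.measurable.ennreal_ofReal
  have hmeas' : Measurable fun x => ENNReal.ofReal (1 - R / N x) :=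
    (measurable_const.sub (measurable_const.div hN.continuous.measurable)).ennreal_ofReal
  calc ∫⁻ x, ‖f x‖ₑ ∂μ
      ≤ ENNReal.ofReal R * ∫⁻ x, ‖f x‖ₑ / ENNReal.ofReal (N x) ∂μ +
          eLpNorm f ⊤ μ * ∫⁻ x, ENNReal.ofReal (1 - R / N x) ∂μ := by
        refine (lintegral_mono_ae hsplit).trans_eq ?_
        rw [lintegral_add_left (hmeas.const_mul _), lintegral_const_mul _ hmeas,
          lintegral_const_mul _ hmeas']
    _ ≤ ENNReal.ofReal R *
          (ENNReal.ofReal (1 / (1 - d)) * ∫⁻ x, ENNReal.ofReal (metricSlope N f x) ∂μ) +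
          eLpNorm f ⊤ μ *
            (ENNReal.ofReal (1 / (1 - d)) * (ENNReal.ofReal (R ^ d) * μ {x | 1 ≤ N x})) := by
        rw [hμ.lintegral_one_sub_div_gauge hd hN hR]
        gcongr
        exact hμ.lintegral_enorm_div_gauge_le hd hN hf hf0
    _ = _ := by ring

end IsHomogeneousMeasure_s19

theorem IsHomogeneousMeasure_s19.withDensity [BorelSpace E] [FiniteDimensional ℝ E] [Nontrivial E]
    (ν : Measure E) [ν.IsAddHaarMeasure] {w : E → ℝ} {k : ℝ} (hwm : Measurable w)
    (hwhom : ∀ c : ℝ, 0 < c → ∀ x, x ≠ 0 → w (c • x) = c ^ k * w x)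
    (hwloc : LocallyIntegrableOn w {0}ᶜ ν) :
    IsHomogeneousMeasure_s19 (ν.withDensity fun x => ENNReal.ofReal (w x))
      (k + Module.finrank ℝ E) where
  map_smul c hc := by
    ext A hA
    have hsm : Measurable fun x : E => c • x := measurable_const_smul c
    have hW : Measurable fun x => ENNReal.ofReal (w x) := hwm.ennreal_ofReal
    have hdens : ∀ᵐ x ∂ν, ENNReal.ofReal (w x) =
        ENNReal.ofReal (c ^ (-k)) * ENNReal.ofReal (w (c • x)) := by
      filter_upwards [Measure.ae_ne ν 0] with x hx
      rw [← ENNReal.ofReal_mul (by positivity), hwhom c hc x hx, ← mul_assoc,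
        ← Real.rpow_add hc, neg_add_cancel, Real.rpow_zero, one_mul]
    have hchange : ∫⁻ x in (c • ·) ⁻¹' A, ENNReal.ofReal (w (c • x)) ∂ν =
        ENNReal.ofReal (c ^ (-(Module.finrank ℝ E : ℝ))) * ∫⁻ x in A, ENNReal.ofReal (w x) ∂ν := by
      rw [← setLIntegral_map hA hW hsm, Measure.map_addHaar_smul ν hc.ne', Measure.restrict_smul,
        lintegral_smul_measure, smul_eq_mul, abs_of_pos (by positivity), Real.rpow_neg hc.le,
        Real.rpow_natCast]
    rw [Measure.map_apply hsm hA, withDensity_apply _ (hsm hA), Measure.smul_apply,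
      withDensity_apply _ hA, lintegral_congr_ae (ae_restrict_of_ae hdens),
      lintegral_const_mul' _ _ ENNReal.ofReal_ne_top, hchange, smul_eq_mul, ← mul_assoc,
      ← ENNReal.ofReal_mul (by positivity), ← Real.rpow_add hc, neg_add]
  measure_zero := withDensity_absolutelyContinuous _ _ (measure_singleton 0)
  measure_lt_top K hK h0 := by
    rw [withDensity_apply _ hK.measurableSet]
    exact (hwloc.integrableOn_compact_subset (subset_compl_singleton_iff.2 h0) hK).lintegral_lt_top

theorem exists_scale_eq {q g φ m : ℝ} (hq : q < 0) (hg : 0 < g) (hφ : 0 < φ) (hm : 0 < m) :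
    ∃ R > 0, 1 / (1 - 1 / q) * (R * g + φ * (R ^ (1 / q) * m)) =
      (-(1 / q) * m ^ q) ^ (-(1 / (1 - q))) * g ^ (1 / (1 - q)) * φ ^ (1 - 1 / (1 - q)) := by
  have hq' : 0 < -(1 / q) := neg_pos.2 (one_div_neg.2 hq)
  have hq1 : 1 - q ≠ 0 := by linarith
  have hq0 := hq.ne
  set k : ℝ := -(1 / q) * φ * m / g with hk_def
  have hk : 0 < k := by positivity
  -- The critical point of the left-hand side, where `R ^ (1 / q - 1) = k⁻¹`.
  set R : ℝ := k ^ (-q / (1 - q)) with hR_def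
  have hR : 0 < R := by positivity
  have hcrit : R ^ (1 / q) = R * k⁻¹ := by
    rw [hR_def, ← Real.rpow_mul hk.le, ← Real.rpow_neg_one k, ← Real.rpow_add hk]
    congr 1
    field_simp
    ring
  have hmin : 1 / (1 - 1 / q) * (R * g + φ * (R ^ (1 / q) * m)) = -q * (R * g) := by
    have : 1 - 1 / q ≠ 0 := by linarith
    have : q - 1 ≠ 0 := by linarith
    rw [hcrit, hk_def]
    field_simp
    ring
  have hqneg : 0 < -q := neg_pos.2 hq
  have hlogq : Real.log (-(1 / q)) = -Real.log (-q) := by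
    rw [← one_div_neg_eq_neg_one_div, one_div, Real.log_inv]
  have hlogR : Real.log R =
      -q / (1 - q) * (-Real.log (-q) + Real.log φ + Real.log m - Real.log g) := by
    rw [hR_def, Real.log_rpow hk, hk_def, Real.log_div (by positivity) hg.ne',
      Real.log_mul (by positivity) hm.ne', Real.log_mul hq'.ne' hφ.ne', hlogq]
  refine ⟨R, hR, hmin.trans ?_⟩
  refine Real.log_injOn_pos (mem_Ioi.2 (by positivity)) (mem_Ioi.2 (by positivity)) ?_
  rw [Real.log_mul hqneg.ne' (by positivity), Real.log_mul hR.ne' hg.ne', hlogR,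
    Real.log_mul (by positivity) (by positivity), Real.log_mul (by positivity) (by positivity),
    Real.log_rpow (by positivity), Real.log_rpow hg, Real.log_rpow hφ,
    Real.log_mul hq'.ne' (by positivity), Real.log_rpow hm, hlogq]
  field_simp
  ring

theorem exists_pos_ofReal_eq {a : ℝ≥0∞} (h0 : a ≠ 0) (htop : a ≠ ⊤) :
    ∃ r > 0, ENNReal.ofReal r = a :=
  ⟨a.toReal, ENNReal.toReal_pos h0 htop, ENNReal.ofReal_toReal htop⟩

theorem le_mul_rpow_mul_rpow_of_forall_scale {q : ℝ} (hq : q < 0) {X G F M : ℝ≥0∞} (hG : G ≠ 0)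
    (hF : F ≠ 0) (hM : M ≠ 0) (hM_top : M ≠ ⊤)
    (h : ∀ R : ℝ, 0 < R → X ≤ ENNReal.ofReal (1 / (1 - 1 / q)) *
      (ENNReal.ofReal R * G + F * (ENNReal.ofReal (R ^ (1 / q)) * M))) :
    X ≤ ENNReal.ofReal ((-(1 / q) * M.toReal ^ q) ^ (-(1 / (1 - q)))) * G ^ (1 / (1 - q)) *
      F ^ (1 - 1 / (1 - q)) := by
  have hα : 0 < 1 / (1 - q) := one_div_pos.2 (by linarith)
  have hα1 : 0 < 1 - 1 / (1 - q) := sub_pos.2 ((div_lt_one (by linarith)).2 (by linarith))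
  have hq' : 0 < -(1 / q) := neg_pos.2 (one_div_neg.2 hq)
  obtain ⟨m, hm, rfl⟩ := exists_pos_ofReal_eq hM hM_top
  rw [ENNReal.toReal_ofReal hm.le]
  set C : ℝ := (-(1 / q) * m ^ q) ^ (-(1 / (1 - q)))
  have hC : 0 < C := by positivity
  rcases eq_or_ne G ⊤ with rfl | hG_top
  · have hFα : F ^ (1 - 1 / (1 - q)) ≠ 0 :=
      (ENNReal.rpow_eq_zero_iff_of_pos hα1).not.2 hF
    rw [ENNReal.top_rpow_of_pos hα, ENNReal.mul_top (by simpa using hC), ENNReal.top_mul hFα]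
    exact le_top
  rcases eq_or_ne F ⊤ with rfl | hF_top
  · have hGα : G ^ (1 / (1 - q)) ≠ 0 :=
      (ENNReal.rpow_eq_zero_iff_of_pos hα).not.2 hG
    rw [ENNReal.top_rpow_of_pos hα1, ENNReal.mul_top (mul_ne_zero (by simpa using hC) hGα)]
    exact le_top
  obtain ⟨g, hg, rfl⟩ := exists_pos_ofReal_eq hG hG_top
  obtain ⟨φ, hφ, rfl⟩ := exists_pos_ofReal_eq hF hF_top
  obtain ⟨R, hR, hval⟩ := exists_scale_eq hq hg hφ hm
  calc X ≤ ENNReal.ofReal (1 / (1 - 1 / q)) * (ENNReal.ofReal R * ENNReal.ofReal g +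
          ENNReal.ofReal φ * (ENNReal.ofReal (R ^ (1 / q)) * ENNReal.ofReal m)) := h R hR
    _ = ENNReal.ofReal (1 / (1 - 1 / q) * (R * g + φ * (R ^ (1 / q) * m))) := by
        rw [ENNReal.ofReal_mul (one_div_nonneg.2 (by linarith)),
          ENNReal.ofReal_add (by positivity) (by positivity), ENNReal.ofReal_mul hR.le,
          ENNReal.ofReal_mul hφ.le, ENNReal.ofReal_mul (by positivity)]
    _ = _ := by
        rw [hval, ENNReal.ofReal_mul (by positivity), ENNReal.ofReal_mul hC.le,
          ENNReal.ofReal_rpow_of_pos hg, ENNReal.ofReal_rpow_of_pos hφ]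

theorem IsHomogeneousMeasure_s19.lintegral_enorm_le_nash [BorelSpace E] [FiniteDimensional ℝ E]
    {q : ℝ} (hμ : IsHomogeneousMeasure_s19 μ (1 / q)) (hq : q < 0) (hN : IsHomogeneousGauge N)
    (hf : LocallyLipschitz f) (hf0 : f 0 = 0) :
    ∫⁻ x, ‖f x‖ₑ ∂μ ≤
      ENNReal.ofReal ((-(1 / q) * (μ {x | 1 ≤ N x}).toReal ^ q) ^ (-(1 / (1 - q)))) *
        (∫⁻ x, ENNReal.ofReal (metricSlope N f x) ∂μ) ^ (1 / (1 - q)) *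
        eLpNorm f ⊤ μ ^ (1 - 1 / (1 - q)) := by
  have hd : 1 / q < 0 := one_div_neg.2 hq
  have hd1 : 1 / q < 1 := hd.trans one_pos
  by_cases hfμ : f =ᵐ[μ] 0
  · have hzero : ∫⁻ x, ‖f x‖ₑ ∂μ = 0 := by
      rw [lintegral_eq_zero_iff hf.continuous.measurable.enorm]
      filter_upwards [hfμ] with x hx
      simp [hx]
    exact hzero.trans_le zero_le
  refine le_mul_rpow_mul_rpow_of_forall_scale hq ?_ ?_ ?_
    (hμ.measure_one_le_gauge_lt_top hd hN).ne
    fun R hR => hμ.lintegral_enorm_le_add hd1 hN hf hf0 hR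
  · exact mt (hμ.ae_eq_zero_of_lintegral_metricSlope_eq_zero hd1 hN hf hf0) hfμ
  · rwa [Ne, eLpNorm_eq_zero_iff hf.continuous.aestronglyMeasurable ENNReal.top_ne_zero]
  · intro hM
    obtain rfl := hμ.eq_zero_of_measure_one_le_gauge hN hM
    exact hfμ (by simp [Filter.EventuallyEq])

theorem stmt19_general [BorelSpace E] [FiniteDimensional ℝ E] (ν : Measure E)
    [ν.IsAddHaarMeasure] {p q α C₁ C₂ : ℝ} (hp : p ∈ Ioo (-(1 / (Module.finrank ℝ E : ℝ))) 0)
    (hq : 1 / q = 1 / p + Module.finrank ℝ E) {w : E → ℝ} (hwm : Measurable w)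
    (hw0 : ∀ x, 0 ≤ w x)
    (hwhom : ∀ c : ℝ, 0 < c → ∀ x, x ≠ 0 → w (c • x) ^ p = c * w x ^ p)
    (hwloc : LocallyIntegrableOn w {0}ᶜ ν)
    (hμ : μ = ν.withDensity fun x => ENNReal.ofReal (w x)) (hN : IsHomogeneousGauge N)
    (hα : α = 1 / (1 - q)) (hC₁ : C₁ = -(1 / q) * (μ {x | 1 ≤ N x}).toReal ^ q)
    (hC₂ : C₂ = C₁ ^ (-α)) (hf : LocallyLipschitz f) (hf0 : f 0 = 0) :
    ∫⁻ x, ENNReal.ofReal |f x| ∂μ ≤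
      ENNReal.ofReal C₂ * (∫⁻ x, ENNReal.ofReal (metricSlope N f x) ∂μ) ^ α *
        eLpNorm f ⊤ μ ^ (1 - α) := by
  have hdim : 0 < Module.finrank ℝ E := by
    refine Nat.pos_of_ne_zero fun h0 => ?_
    simp only [h0, Nat.cast_zero, div_zero, neg_zero, Ioo_self, mem_empty_iff_false] at hp
  have : Nontrivial E := Module.finrank_pos_iff.1 hdim
  have hdeg : 1 / p < -(Module.finrank ℝ E : ℝ) := by
    simpa [neg_div, ← neg_inv] using one_div_lt_one_div_of_neg_of_lt hp.2 hp.1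
  have hq0 : q < 0 := one_div_neg.1 (by linarith)
  have hμq : IsHomogeneousMeasure_s19 μ (1 / q) := by
    rw [hμ, hq]
    exact .withDensity ν hwm (homogeneous_of_rpow_homogeneous hp.2.ne hw0 hwhom) hwloc
  subst hC₂ hC₁ hα
  simpa only [Real.enorm_eq_ofReal_abs] using hμq.lintegral_enorm_le_nash hq0 hN hf hf0

end

/-- Nash-type inequality for a locally-integrable `p`-homogeneous density,
`p ∈ (-1/n, 0)`, `1/q = 1/p + n`, `α = 1/(1-q)`:
`‖f‖_{L¹(μ)} ≤ C₂ (∫‖∇f‖* dμ)^α ‖f‖_{L^∞(μ)}^{1-α}` for locally Lipschitz `f` with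
`f(0) = 0`, where `‖∇f‖*(x) = limsup_{y→x} |f(y)-f(x)|/‖y-x‖`. -/
theorem stmt19 (n : ℕ) (hn : 1 ≤ n) (p q α C₁ C₂ : ℝ)
    (hp : p ∈ Set.Ioo (-(1 / (n : ℝ))) 0) (hq : 1 / q = 1 / p + (n : ℝ))
    (w : (Fin n → ℝ) → ℝ) (hwm : Measurable w) (hw0 : ∀ x, 0 ≤ w x)
    (hwhom : ∀ c : ℝ, 0 < c → ∀ x : Fin n → ℝ, x ≠ 0 → w (c • x) ^ p = c * w x ^ p)
    (hwloc : LocallyIntegrableOn w {(0 : Fin n → ℝ)}ᶜ volume)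
    (μ : Measure (Fin n → ℝ))
    (hμ : μ = volume.withDensity fun x => ENNReal.ofReal (w x))
    (N : (Fin n → ℝ) → ℝ) (hN0 : ∀ x, 0 ≤ N x) (hNpos : ∀ x, x ≠ 0 → 0 < N x)
    (hNadd : ∀ x y, N (x + y) ≤ N x + N y)
    (hNhom : ∀ c : ℝ, 0 ≤ c → ∀ x, N (c • x) = c * N x)
    (hα : α = 1 / (1 - q))
    (hC₁ : C₁ = -(1 / q) * (μ {x | 1 ≤ N x}).toReal ^ q)
    (hC₂ : C₂ = C₁ ^ (-α))
    (f : (Fin n → ℝ) → ℝ) (hf : LocallyLipschitz f) (hf0 : f 0 = 0)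
    (hfbdd : eLpNorm f ⊤ μ < ⊤) :
    ∫⁻ x, ENNReal.ofReal |f x| ∂μ ≤
      ENNReal.ofReal C₂ *
        (∫⁻ x, ENNReal.ofReal
          (Filter.limsup (fun y => |f y - f x| / N (y - x)) (𝓝[≠] x)) ∂μ) ^ α *
        eLpNorm f ⊤ μ ^ (1 - α) := by
  exact stmt19_general volume (by simpa using hp) (by simpa using hq) hwm hw0 hwhom hwloc hμ
    (.of_subadditive hNpos hNadd hNhom) hα hC₁ hC₂ hf hf0
end
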